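/- arXiv:math/0412354 — 8 statements merged into one kernel-verified Lean document; each statement's English description precedes it below -/
import Mathlib

section
/- Let K be a field of characteristic 0 equipped with a derivation D, let L be a differential subfield of K, and let b, a₁, …, aₙ ∈ K. If a₁, …, aₙ are differentially algebraic over L and b is differentially algebraic over the differential subfield L⟨a₁, …, aₙ⟩ generated by a₁, …, aₙ over L, then b is differentially algebraic over L. -/
/-- `b ∈ K` is differentially algebraic over the differential subfield `L` of `K`:
there are `n ∈ ℕ` and a nonzero polynomial in `n + 1` variables with coefficients in `L`
vanishing at `(b, Db, …, Dⁿb)`. -/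
def IsDifferentiallyAlgebraic {K : Type*} [Field K] (D : K → K) (L : Subfield K) (b : K) :
    Prop :=
  ∃ (n : ℕ) (P : MvPolynomial (Fin (n + 1)) K),
    P ≠ 0 ∧ (∀ m, P.coeff m ∈ L) ∧
    MvPolynomial.eval (fun i : Fin (n + 1) => D^[i.val] b) P = 0

open Polynomial in
lemma aux_eval {K R : Type*} [Field K] [CommRing R] [IsDomain R] [Algebra R K] [FaithfulSMul R K]
    (D : Derivation ℤ K K) (hR : ∀ r : R, IsAlgebraic R (D (algebraMap R K r)))
    (x : K) (hx : IsAlgebraic R x) (p : R[X]) :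
    IsAlgebraic R (D (aeval x p) - aeval x (derivative p) * D x) := by
  induction p using Polynomial.induction_on' with
  | add p q hp hq =>
    have := hp.add hq
    refine (congrArg (IsAlgebraic R) ?_).mpr this
    simp only [map_add]; ring
  | monomial n a =>
    have := (hx.pow n).mul (hR a)
    refine (congrArg (IsAlgebraic R) ?_).mpr this
    simp only [aeval_monomial, derivative_monomial, Derivation.leibniz, Derivation.leibniz_pow,
      smul_eq_mul, map_mul, map_natCast, nsmul_eq_mul]
    ring

open Polynomial in
lemma aux_deriv {K R : Type*} [Field K] [CharZero K] [CommRing R] [IsDomain R] [Algebra R K]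
    [FaithfulSMul R K]
    (D : Derivation ℤ K K) (hR : ∀ r : R, IsAlgebraic R (D (algebraMap R K r)))
    (x : K) (hx : IsAlgebraic R x) : IsAlgebraic R (D x) := by
  have hinj := FaithfulSMul.algebraMap_injective R K
  have : CharZero R := (algebraMap R K).charZero_iff hinj |>.2 inferInstance
  have key : ∀ (n : ℕ) (p : R[X]), p.natDegree ≤ n → p ≠ 0 → aeval x p = 0 →
      IsAlgebraic R (D x) := by
    intro n
    induction n with
    | zero =>
      intro p hp h0 h
      exfalso
      rw [Polynomial.eq_C_of_natDegree_le_zero hp, aeval_C] at h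
      apply h0
      rw [Polynomial.eq_C_of_natDegree_le_zero hp, (map_eq_zero_iff _ hinj).1 h, C_0]
    | succ n ih =>
      intro p hp h0 h
      by_cases hd : p.natDegree = 0
      · exact ih p (by omega) h0 h
      have hlt := Polynomial.natDegree_derivative_lt hd
      have hne : derivative p ≠ 0 := fun h' => hd (Polynomial.derivative_eq_zero.1 h')
      by_cases h1 : aeval x (derivative p) = 0
      · exact ih _ (by omega) hne h1
      · have h2 := aux_eval D hR x hx p
        rw [h, map_zero, zero_sub] at h2
        have h3 : IsAlgebraic R (aeval x (derivative p)) :=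
          Polynomial.induction_on' (motive := fun q => IsAlgebraic R (aeval x q)) _
            (fun p q hp hq => by rw [map_add]; exact hp.add hq)
            (fun n a => by rw [aeval_monomial]; exact (isAlgebraic_algebraMap a).mul (hx.pow n))
        have h4 := (h2.neg).mul h3.inv
        refine (congrArg (IsAlgebraic R) ?_).mpr h4
        field_simp
        try ring
  obtain ⟨p, h0, h⟩ := hx
  exact key _ p le_rfl h0 h

lemma alg_mono {K : Type*} [Field K] {R S : Subring K} (h : R ≤ S) {x : K}
    (hx : IsAlgebraic R x) : IsAlgebraic S x := by
  let _ := (Subring.inclusion h).toAlgebra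
  have : IsScalarTower R S K := .of_algebraMap_eq fun _ => rfl
  exact hx.extendScalars (Subring.inclusion_injective h)

lemma isDiffAlg_iff {K : Type*} [Field K] (D : K → K) (L : Subfield K) (b : K) :
    IsDifferentiallyAlgebraic D L b ↔ ¬ AlgebraicIndependent L (fun k : ℕ => D^[k] b) := by
  rw [algebraicIndependent_iff]
  push Not
  constructor
  · rintro ⟨n, P, hP, hc, h⟩
    obtain ⟨Q, rfl⟩ : ∃ Q : MvPolynomial (Fin (n + 1)) L, MvPolynomial.map (algebraMap L K) Q = P := by
      have : P ∈ Set.range (MvPolynomial.map (algebraMap L K)) := by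
        rw [MvPolynomial.mem_range_map_iff_coeffs_subset]
        intro c hcc
        obtain ⟨m, -, rfl⟩ := MvPolynomial.mem_coeffs_iff.1 hcc
        exact ⟨⟨_, hc m⟩, rfl⟩
      exact this
    refine ⟨MvPolynomial.rename Fin.val Q, ?_, ?_⟩
    · rw [MvPolynomial.aeval_rename, MvPolynomial.aeval_def, ← MvPolynomial.eval_map]
      exact h
    · intro h0
      rw [map_eq_zero_iff _ (MvPolynomial.rename_injective _ Fin.val_injective)] at h0
      simp [h0] at hP
  · rintro ⟨Q, h, h0⟩
    obtain ⟨n, hn⟩ : ∃ n, ∀ i ∈ Q.vars, i < n + 1 :=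
      ⟨Q.vars.sup id, fun i hi => Nat.lt_succ_of_le (Finset.le_sup (f := id) hi)⟩
    obtain ⟨P, rfl⟩ := MvPolynomial.exists_rename_eq_of_vars_subset_range Q
      (Fin.val : Fin (n + 1) → ℕ) Fin.val_injective (fun i hi => ⟨⟨i, hn i hi⟩, rfl⟩)
    refine ⟨n, MvPolynomial.map (algebraMap L K) P, ?_, ?_, ?_⟩
    · rw [Ne, map_eq_zero_iff _ (MvPolynomial.map_injective _ (algebraMap L K).injective)]
      rintro rfl
      exact h0 (map_zero _)
    · intro m
      rw [MvPolynomial.coeff_map]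
      exact (P.coeff m).2
    · rw [MvPolynomial.aeval_rename, MvPolynomial.aeval_def, ← MvPolynomial.eval_map] at h
      exact h

open Algebra in
lemma exists_dep {K : Type*} [Field K] (L : Subfield K) (f : ℕ → K)
    (h : ¬ AlgebraicIndependent L f) :
    ∃ n, IsAlgebraic (adjoin L (f '' Set.Iio n)) (f n) := by
  by_contra! hn
  have key : ∀ n, AlgebraicIndepOn L f (Set.Iio n) := by
    intro n
    induction n with
    | zero =>
      have : IsEmpty (Set.Iio (0:ℕ)) := by simp
      exact algebraicIndependent_empty_type_iff.2 (algebraMap L K).injective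
    | succ n ih =>
      have : Set.Iio (n + 1) = insert n (Set.Iio n) := by ext; simp
      rw [this]
      exact ih.insert (hn n)
  apply h
  apply algebraicIndependent_of_finite_type
  intro t ht
  obtain ⟨m, hm⟩ := ht.bddAbove
  exact (key (m + 1)).mono (fun i hi => Nat.lt_succ_of_le (hm hi))

open Algebra in
lemma finite_gen {K : Type*} [Field K] [CharZero K] (D : Derivation ℤ K K)
    (L : Subfield K) (hL : ∀ x ∈ L, D x ∈ L) (b : K)
    (hb : IsDifferentiallyAlgebraic D L b) :
    ∃ S : Set K, S.Finite ∧ ∀ k, IsAlgebraic (adjoin L S) (D^[k] b) := by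
  rw [isDiffAlg_iff] at hb
  obtain ⟨n, hn⟩ := exists_dep L _ hb
  set S := (fun k : ℕ => D^[k] b) '' Set.Iio n with hS
  refine ⟨S, (Set.finite_Iio n).image _, ?_⟩
  have hlt : ∀ k < n, IsAlgebraic (adjoin L S) (D^[k] b) := fun k hk =>
    isAlgebraic_algebraMap (⟨_, subset_adjoin ⟨k, hk, rfl⟩⟩ : adjoin L S)
  have hR : ∀ r : adjoin L S, IsAlgebraic (adjoin L S) (D (algebraMap _ K r)) := by
    rintro ⟨r, hr⟩
    change IsAlgebraic (adjoin L S) (D r)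
    induction hr using adjoin_induction with
    | mem x hx =>
      obtain ⟨k, hk, rfl⟩ := hx
      have hk : k < n := hk
      simp only
      rw [← Function.iterate_succ_apply' (⇑D) k b]
      rcases (Nat.succ_le_of_lt hk).lt_or_eq with h | h
      · exact hlt _ h
      · rw [h]; exact hn
    | algebraMap r =>
      exact isAlgebraic_algebraMap
        (algebraMap L (adjoin L S) ⟨D r, hL _ r.2⟩)
    | add x y hx hy h1 h2 => rw [map_add]; exact h1.add h2
    | mul x y hx hy h1 h2 =>
      rw [Derivation.leibniz]
      exact ((isAlgebraic_algebraMap (⟨x, hx⟩ : adjoin L S)).mul h2).add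
        ((isAlgebraic_algebraMap (⟨y, hy⟩ : adjoin L S)).mul h1)
  intro k
  induction k with
  | zero =>
    rcases Nat.eq_zero_or_pos n with h | h
    · rw [h] at hn; exact hn
    · exact hlt 0 h
  | succ k ih =>
    rw [Function.iterate_succ_apply']
    exact aux_deriv D hR _ ih

open Algebra in
/-- The elements of `K` algebraic over `L[S]`, as a subfield. -/
noncomputable def aclS {K : Type*} [Field K] (L : Subfield K) (S : Set K) : Subfield K :=
  { (Subalgebra.algebraicClosure (adjoin L S) K).toSubring with
    inv_mem' := fun _ hx => IsAlgebraic.inv hx }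

open Algebra in
lemma mem_aclS {K : Type*} [Field K] (L : Subfield K) (S : Set K) (x : K) :
    x ∈ aclS L S ↔ IsAlgebraic (adjoin L S) x := Iff.rfl

open Algebra in
lemma aclS_mono {K : Type*} [Field K] (L : Subfield K) {S T : Set K} (h : S ⊆ T) :
    aclS L S ≤ aclS L T := fun x hx =>
  alg_mono (R := (adjoin L S).toSubring) (S := (adjoin L T).toSubring) (adjoin_mono h) hx

open Algebra in
lemma aclS_trans {K : Type*} [Field K] (L : Subfield K) {S : Set K} {x : K}
    (h : IsAlgebraic (aclS L S).toSubring x) : x ∈ aclS L S := by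
  have : IsAlgebraic (Subalgebra.algebraicClosure (adjoin L S) K) x := h
  exact this.restrictScalars (adjoin L S)

open Algebra in
lemma not_indep {K : Type*} [Field K] (L : Subfield K) {S : Set K} (hS : S.Finite) (f : ℕ → K)
    (h : ∀ k, f k ∈ aclS L S) : ¬ AlgebraicIndependent L f := by
  intro hi
  have h1 : (AlgebraicIndependent.matroid L K).Indep (Set.range f) := by
    rw [AlgebraicIndependent.matroid_indep_iff]
    exact AlgebraicIndependent.to_subtype_range hi
  have h2 : Set.range f ⊆ (AlgebraicIndependent.matroid L K).closure S := by
    rw [AlgebraicIndependent.matroid_closure_eq]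
    rintro _ ⟨k, rfl⟩
    exact h k
  have h3 : (AlgebraicIndependent.matroid L K).IsRkFinite S := Matroid.isRkFinite_of_finite _ hS
  have h4 := h1.finite_of_subset_isRkFinite h2 h3.closure
  exact Set.infinite_range_of_injective hi.injective h4

/-- If `a₁, …, aₙ` are differentially algebraic over `L` and `b` is differentially
algebraic over the differential subfield `L⟨a₁, …, aₙ⟩` (generated by `L` together with
all derivatives `Dᵏaᵢ`), then `b` is differentially algebraic over `L`. -/
theorem diffAlgebraic_trans_of_finitely_generated {K : Type*} [Field K] [CharZero K]
    (D : K → K)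
    (hD_add : ∀ x y : K, D (x + y) = D x + D y)
    (hD_mul : ∀ x y : K, D (x * y) = x * D y + y * D x)
    (L : Subfield K) (hL : ∀ x ∈ L, D x ∈ L)
    (n : ℕ) (a : Fin n → K) (b : K)
    (ha : ∀ i, IsDifferentiallyAlgebraic D L (a i))
    (hb : IsDifferentiallyAlgebraic D
      (Subfield.closure ((L : Set K) ∪ {x | ∃ (k : ℕ) (i : Fin n), x = D^[k] (a i)})) b) :
    IsDifferentiallyAlgebraic D L b := by
  obtain ⟨D, rfl⟩ : ∃ D' : Derivation ℤ K K, ⇑D' = D := by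
    refine ⟨Derivation.mk' (AddMonoidHom.mk' D hD_add).toIntLinearMap ?_, rfl⟩
    intro x y
    simpa using hD_mul x y
  set M := Subfield.closure ((L : Set K) ∪ {x | ∃ (k : ℕ) (i : Fin n), x = D^[k] (a i)}) with hMdef
  have hM : ∀ x ∈ M, D x ∈ M := by
    intro x hx
    induction hx using Subfield.closure_induction with
    | mem x hx =>
      apply Subfield.subset_closure
      rcases hx with hx | ⟨k, i, rfl⟩
      · exact Or.inl (hL x hx)
      · exact Or.inr ⟨k + 1, i, (Function.iterate_succ_apply' _ _ _).symm⟩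
    | one => rw [Derivation.map_one_eq_zero]; exact zero_mem _
    | add x y hx hy h1 h2 => rw [map_add]; exact add_mem h1 h2
    | neg x hx h1 => rw [map_neg]; exact neg_mem h1
    | inv x hx h1 =>
      rw [Derivation.leibniz_inv]
      exact mul_mem (neg_mem (pow_mem (inv_mem hx) 2)) h1
    | mul x y hx hy h1 h2 =>
      rw [Derivation.leibniz]
      exact add_mem (mul_mem hx h2) (mul_mem hy h1)
  choose S hSf hS using fun i => finite_gen D L hL (a i) (ha i)
  obtain ⟨T, hTf, hT⟩ := finite_gen D M hM b hb
  have hUf : ((⋃ i, S i) ∪ T).Finite := (Set.finite_iUnion hSf).union hTf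
  set U := (⋃ i, S i) ∪ T with hU
  have hLU : ∀ x ∈ L, x ∈ aclS L U := fun x hx =>
    isAlgebraic_algebraMap (algebraMap L (Algebra.adjoin L U) ⟨x, hx⟩)
  have hUU : U ⊆ aclS L U := fun x hx =>
    isAlgebraic_algebraMap (⟨x, Algebra.subset_adjoin hx⟩ : Algebra.adjoin L U)
  have hMU : M ≤ aclS L U := by
    rw [hMdef, Subfield.closure_le]
    rintro x (hx | ⟨k, i, rfl⟩)
    · exact hLU x hx
    · exact aclS_mono L ((Set.subset_iUnion S i).trans Set.subset_union_left) (hS i k)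
  rw [isDiffAlg_iff]
  refine not_indep L hUf _ fun k => aclS_trans L ?_
  refine alg_mono (R := (Algebra.adjoin M T).toSubring) ?_ (hT k)
  intro x hx0
  have hx : x ∈ Algebra.adjoin M T := hx0
  clear hx0
  change x ∈ aclS L U
  induction hx using Algebra.adjoin_induction with
  | mem x hx => exact hUU (Or.inr hx)
  | algebraMap r => exact hMU r.2
  | add x y hx hy h1 h2 => exact add_mem h1 h2
  | mul x y hx hy h1 h2 => exact mul_mem h1 h2
end

section
/- Let K be a field of characteristic 0 equipped with a derivation D, and let F ⊆ L ⊆ K be differential subfields. If every element of L is differentially algebraic over F and every element of K is differentially algebraic over L, then every element of K is differentially algebraic over F. -/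
namespace DiffTower

open MvPolynomial

variable {K : Type*} [Field K]

/-- algebraicity passes to larger rings of coefficients -/
theorem alg_transfer {R S : Type*} [CommRing R] [CommRing S] [Algebra R K] [Algebra S K]
    (hR : Function.Injective (algebraMap R K))
    (f : R →+* S) (hf : ∀ r, algebraMap S K (f r) = algebraMap R K r) {x : K}
    (h : IsAlgebraic R x) : IsAlgebraic S x := by
  have hfi : Function.Injective f := by
    intro a b hab
    apply hR
    rw [← hf, ← hf, hab]
  exact IsAlgebraic.ringHom_of_comp_eq f (RingHom.id K) h hfi (RingHom.ext hf)

theorem sub_transfer {k M : Subfield K} (h : k ≤ M) {x : K} (hx : IsAlgebraic k x) :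
    IsAlgebraic M x :=
  alg_transfer Subtype.val_injective (Subfield.inclusion h) (fun _ => rfl) hx

/-- the relative algebraic closure in `K` of the subfield generated by `A` -/
noncomputable def cl (A : Set K) : Subfield K :=
  (algebraicClosure (Subfield.closure A) K).toSubfield

theorem mem_cl {A : Set K} {x : K} : x ∈ cl A ↔ IsAlgebraic (Subfield.closure A) x :=
  mem_algebraicClosure_iff

theorem closure_le_cl (A : Set K) : Subfield.closure A ≤ cl A := by
  intro x hx
  rw [mem_cl]
  exact isAlgebraic_algebraMap (⟨x, hx⟩ : Subfield.closure A)

theorem subset_cl (A : Set K) : A ⊆ cl A :=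
  fun _ hx => closure_le_cl A (Subfield.subset_closure hx)

theorem cl_mono {A B : Set K} (h : A ⊆ B) : cl A ≤ cl B := by
  intro x hx
  rw [mem_cl] at hx ⊢
  exact sub_transfer (Subfield.closure_mono h) hx

theorem cl_closed {A : Set K} {x : K} (h : IsAlgebraic (cl A) x) : x ∈ cl A := by
  rw [mem_cl]
  have h' : IsAlgebraic (algebraicClosure (Subfield.closure A) K) x := h
  exact isAlgebraic_iff_isIntegral.2 (isIntegral_trans (R := Subfield.closure A) x h'.isIntegral)

theorem D_one {D : K → K}
    (hD_add : ∀ x y : K, D (x + y) = D x + D y)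
    (hD_mul : ∀ x y : K, D (x * y) = x * D y + y * D x) : D 1 = 0 := by
  have := hD_mul 1 1
  simpa using this

theorem D_zero {D : K → K}
    (hD_add : ∀ x y : K, D (x + y) = D x + D y)
    (hD_mul : ∀ x y : K, D (x * y) = x * D y + y * D x) : D 0 = 0 := by
  have := hD_add 0 0
  simpa using this

theorem D_neg {D : K → K}
    (hD_add : ∀ x y : K, D (x + y) = D x + D y)
    (hD_mul : ∀ x y : K, D (x * y) = x * D y + y * D x) (x : K) : D (-x) = - D x := by
  have := hD_add x (-x)
  rw [add_neg_cancel, D_zero hD_add hD_mul] at this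
  linear_combination -this

theorem D_pow {D : K → K}
    (hD_add : ∀ x y : K, D (x + y) = D x + D y)
    (hD_mul : ∀ x y : K, D (x * y) = x * D y + y * D x) (x : K) (n : ℕ) : D (x ^ (n + 1)) = (n + 1) * x ^ n * D x := by
  induction n with
  | zero => simp
  | succ n ih =>
    rw [pow_succ, hD_mul, ih]
    push_cast
    ring

theorem cl_D [CharZero K] {D : K → K}
    (hD_add : ∀ x y : K, D (x + y) = D x + D y)
    (hD_mul : ∀ x y : K, D (x * y) = x * D y + y * D x) {A : Set K} (hA : ∀ a ∈ A, D a ∈ cl A) : ∀ x ∈ cl A, D x ∈ cl A := by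
  have h0 : ∀ x ∈ Subfield.closure A, D x ∈ cl A := by
    intro x hx
    induction hx using Subfield.closure_induction with
    | mem x hx => exact hA x hx
    | one => rw [D_one hD_add hD_mul]; exact zero_mem _
    | add x y hx hy h1 h2 => rw [hD_add]; exact add_mem h1 h2
    | neg x hx h => rw [D_neg hD_add hD_mul]; exact neg_mem h
    | inv x hx h =>
      by_cases hx0 : x = 0
      · rw [hx0, inv_zero, D_zero hD_add hD_mul]; exact zero_mem _
      · have h1 := hD_mul x x⁻¹
        rw [mul_inv_cancel₀ hx0, D_one hD_add hD_mul] at h1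
        have h2 : D x⁻¹ = - (x⁻¹ * x⁻¹ * D x) := by
          field_simp
          field_simp at h1
          linear_combination -h1
        rw [h2]
        have := inv_mem (closure_le_cl A hx)
        exact neg_mem (mul_mem (mul_mem this this) h)
    | mul x y hx hy h1 h2 =>
      rw [hD_mul]
      exact add_mem (mul_mem (closure_le_cl A hx) h2) (mul_mem (closure_le_cl A hy) h1)
  intro x hx
  have key : ∀ p : Polynomial (Subfield.closure A),
      D (Polynomial.aeval x p) - Polynomial.aeval x (Polynomial.derivative p) * D x ∈ cl A := by
    intro p
    induction p using Polynomial.induction_on' with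
    | add p q hp hq =>
      have := add_mem hp hq
      simp only [map_add, hD_add]
      convert this using 1
      ring
    | monomial n c =>
      rw [Polynomial.derivative_monomial, Polynomial.aeval_monomial, Polynomial.aeval_monomial]
      have hc : algebraMap (Subfield.closure A) K c = (c : K) := rfl
      cases n with
      | zero => simpa [hc] using h0 c c.2
      | succ n =>
        have : D ((c : K) * x ^ (n + 1)) - ((c : K) * ((n : K) + 1)) * x ^ n * D x
            = x ^ (n + 1) * D c := by
          rw [hD_mul, D_pow hD_add hD_mul]; ring
        have h3 : x ^ (n + 1) * D c ∈ cl A := mul_mem (pow_mem hx _) (h0 c c.2)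
        rw [← this] at h3
        simpa [hc] using h3
  have halg := mem_cl.1 hx
  have hsep : (minpoly (Subfield.closure A) x).Separable :=
    (minpoly.irreducible halg.isIntegral).separable
  have hne := hsep.aeval_derivative_ne_zero (minpoly.aeval _ x)
  have h1 := key (minpoly (Subfield.closure A) x)
  rw [minpoly.aeval, D_zero hD_add hD_mul, zero_sub] at h1
  have h2 : Polynomial.aeval x (Polynomial.derivative (minpoly (Subfield.closure A) x)) ∈ cl A := by
    rw [Polynomial.aeval_eq_sum_range]
    refine sum_mem fun i _ => ?_
    rw [Algebra.smul_def]
    exact mul_mem (closure_le_cl A (Subtype.prop _)) (pow_mem hx _)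
  have h3 := mul_mem (inv_mem h2) (neg_mem h1)
  rwa [neg_neg, inv_mul_cancel_left₀ hne] at h3

theorem not_indep_of_da {D : K → K} {E : Subfield K} {b : K}
    (h : IsDifferentiallyAlgebraic D E b) :
    ¬ AlgebraicIndependent E (fun i : ℕ => D^[i] b) := by
  obtain ⟨n, P, hP, hc, he⟩ := h
  intro hi
  have hr : P ∈ Set.range (MvPolynomial.map E.subtype) := by
    rw [MvPolynomial.mem_range_map_iff_coeffs_subset]
    intro c hcm
    obtain ⟨m, _, rfl⟩ := MvPolynomial.mem_coeffs_iff.1 hcm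
    exact ⟨⟨_, hc m⟩, rfl⟩
  obtain ⟨Q, rfl⟩ := hr
  have hj := hi.comp (fun i : Fin (n + 1) => i.val) Fin.val_injective
  apply hP
  have : Q = 0 := by
    apply hj.eq_zero_of_aeval_eq_zero
    rw [MvPolynomial.eval_map] at he
    exact he
  rw [this, map_zero]

theorem da_of_not_indep {D : K → K} {E : Subfield K} {b : K}
    (h : ¬ AlgebraicIndependent E (fun i : ℕ => D^[i] b)) :
    IsDifferentiallyAlgebraic D E b := by
  rw [algebraicIndependent_iff] at h
  push Not at h
  obtain ⟨p, hp, hp0⟩ := h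
  obtain ⟨N, hN⟩ : ∃ N : ℕ, ∀ i ∈ p.vars, i ≤ N :=
    ⟨p.vars.sup id, fun i hi => Finset.le_sup (f := id) hi⟩
  obtain ⟨q, rfl⟩ := MvPolynomial.exists_rename_eq_of_vars_subset_range p
    (fun i : Fin (N + 1) => i.val) Fin.val_injective (by
      intro i hi
      exact ⟨⟨i, Nat.lt_succ_of_le (hN i hi)⟩, rfl⟩)
  refine ⟨_, MvPolynomial.map E.subtype q, ?_, ?_, ?_⟩
  · intro h0
    apply hp0
    rw [MvPolynomial.map_injective _ E.subtype_injective (h0.trans (map_zero _).symm), map_zero]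
  · intro m
    rw [MvPolynomial.coeff_map]
    exact Subtype.prop _
  · rw [MvPolynomial.eval_map]
    rw [MvPolynomial.aeval_rename] at hp
    exact hp

theorem exists_alg_of_da {D : K → K} {E : Subfield K} {b : K}
    (h : IsDifferentiallyAlgebraic D E b) :
    ∃ n : ℕ, IsAlgebraic (Algebra.adjoin E ((fun i : ℕ => D^[i] b) '' Set.Iio n)) (D^[n] b) := by
  by_contra hcon
  push Not at hcon
  have hind : ∀ n : ℕ, AlgebraicIndepOn E (fun i : ℕ => D^[i] b) (Set.Iio n) := by
    intro n
    induction n with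
    | zero =>
      have : IsEmpty (Set.Iio 0) := by simp
      exact algebraicIndependent_empty_type_iff.2 Subtype.val_injective
    | succ n ih =>
      have : Set.Iio (n + 1) = insert n (Set.Iio n) := by
        ext i; simp only [Set.mem_Iio, Set.mem_insert_iff]; omega
      rw [this]
      exact ih.insert (hcon n)
  apply not_indep_of_da h
  apply algebraicIndependent_of_finite_type
  intro t ht
  obtain ⟨N, hN⟩ := ht.bddAbove
  exact (hind (N + 1)).mono (fun i hi => Nat.lt_succ_of_le (hN hi))

theorem da_mono {D : K → K} {E M : Subfield K} (hEM : E ≤ M) {b : K}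
    (h : IsDifferentiallyAlgebraic D E b) : IsDifferentiallyAlgebraic D M b := by
  obtain ⟨n, P, hP, hc, he⟩ := h
  exact ⟨n, P, hP, fun m => hEM (hc m), he⟩

/-- closure of a differential field of finite transcendence degree by one element -/
theorem step [CharZero K] {D : K → K}
    (hD_add : ∀ x y : K, D (x + y) = D x + D y)
    (hD_mul : ∀ x y : K, D (x * y) = x * D y + y * D x)
    {F : Subfield K} (hF : ∀ x ∈ F, D x ∈ F) {T : Set K} (hT : T.Finite)
    (hDT : ∀ x ∈ cl ((F : Set K) ∪ T), D x ∈ cl ((F : Set K) ∪ T)) {b : K}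
    (hb : IsDifferentiallyAlgebraic D (cl ((F : Set K) ∪ T)) b) :
    ∃ T' : Set K, T'.Finite ∧ T ⊆ T' ∧ b ∈ cl ((F : Set K) ∪ T') ∧
      ∀ x ∈ cl ((F : Set K) ∪ T'), D x ∈ cl ((F : Set K) ∪ T') := by
  obtain ⟨n, hn⟩ := exists_alg_of_da hb
  set U : Set K := (fun i : ℕ => D^[i] b) '' Set.Iio n with hU
  have hle : cl ((F : Set K) ∪ T) ≤ cl ((F : Set K) ∪ (T ∪ U)) :=
    cl_mono (Set.union_subset_union_right _ Set.subset_union_left)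
  have hUM : U ⊆ cl ((F : Set K) ∪ (T ∪ U)) := fun x hx => subset_cl _ (Or.inr (Or.inr hx))
  have hadj : ∀ x ∈ Algebra.adjoin (cl ((F : Set K) ∪ T)) U, x ∈ cl ((F : Set K) ∪ (T ∪ U)) := by
    intro x hx
    induction hx using Algebra.adjoin_induction with
    | mem x hx => exact hUM hx
    | algebraMap r => exact hle r.2
    | add x y _ _ h1 h2 => exact add_mem h1 h2
    | mul x y _ _ h1 h2 => exact mul_mem h1 h2
  have hDn : D^[n] b ∈ cl ((F : Set K) ∪ (T ∪ U)) := by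
    apply cl_closed
    exact alg_transfer Subtype.val_injective
      ((Algebra.adjoin (cl ((F : Set K) ∪ T)) U).val.toRingHom.codRestrict
        (cl ((F : Set K) ∪ (T ∪ U))) (fun x => hadj x x.2)) (fun _ => rfl) hn
  have hDle : ∀ i ≤ n, D^[i] b ∈ cl ((F : Set K) ∪ (T ∪ U)) := by
    intro i hi
    rcases hi.lt_or_eq with h | h
    · exact hUM ⟨i, h, rfl⟩
    · rw [h]; exact hDn
  refine ⟨T ∪ U, hT.union ((Set.finite_Iio n).image _), Set.subset_union_left,
    hDle 0 (Nat.zero_le _), cl_D hD_add hD_mul ?_⟩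
  rintro a (ha | ha | ⟨i, hi, rfl⟩)
  · exact subset_cl _ (Or.inl (hF a ha))
  · exact hle (hDT a (subset_cl _ (Or.inr ha)))
  · have := hDle (i + 1) hi
    rwa [Function.iterate_succ_apply'] at this

theorem da_of_finite {D : K → K} {F : Subfield K} {T : Set K} (hT : T.Finite) {b : K}
    (h : ∀ i : ℕ, D^[i] b ∈ cl ((F : Set K) ∪ T)) : IsDifferentiallyAlgebraic D F b := by
  apply da_of_not_indep
  intro hi
  have hinj := hi.injective
  have hI : (AlgebraicIndependent.matroid F K).Indep (Set.range (fun i : ℕ => D^[i] b)) :=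
    hi.to_subtype_range
  have hsub : Set.range (fun i : ℕ => D^[i] b) ⊆ (AlgebraicIndependent.matroid F K).closure T := by
    rintro _ ⟨i, rfl⟩
    rw [AlgebraicIndependent.matroid_closure_eq]
    change IsAlgebraic (Algebra.adjoin F T) (D^[i] b)
    rw [← IntermediateField.isAlgebraic_adjoin_iff]
    have h1 := mem_cl.1 (h i)
    have h2 : Subfield.closure ((F : Set K) ∪ T) ≤
        (IntermediateField.adjoin F T).toSubfield := by
      rw [Subfield.closure_le]
      rintro x (hx | hx)
      · exact (IntermediateField.adjoin F T).algebraMap_mem ⟨x, hx⟩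
      · exact IntermediateField.subset_adjoin F T hx
    exact sub_transfer h2 h1
  have h1 := hI.encard_le_eRk_of_subset hsub
  rw [Matroid.eRk_closure_eq] at h1
  have h2 := h1.trans (Matroid.eRk_le_encard _ T)
  have h3 : (Set.range (fun i : ℕ => D^[i] b)).Finite :=
    Set.finite_of_encard_le_coe (h2.trans_eq hT.encard_eq_coe)
  exact Set.infinite_range_of_injective hinj h3

end DiffTower

/-- If `F ⊆ L ⊆ K` are differential subfields, every element of `L` is differentially
algebraic over `F`, and every element of `K` is differentially algebraic over `L`, then
every element of `K` is differentially algebraic over `F`. -/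
theorem diffAlgebraic_tower {K : Type*} [Field K] [CharZero K] (D : K → K)
    (hD_add : ∀ x y : K, D (x + y) = D x + D y)
    (hD_mul : ∀ x y : K, D (x * y) = x * D y + y * D x)
    (F L : Subfield K) (hFL : F ≤ L)
    (hF : ∀ x ∈ F, D x ∈ F) (hLc : ∀ x ∈ L, D x ∈ L)
    (h₁ : ∀ x ∈ L, IsDifferentiallyAlgebraic D F x)
    (h₂ : ∀ x : K, IsDifferentiallyAlgebraic D L x) :
    ∀ x : K, IsDifferentiallyAlgebraic D F x := by
  intro b
  obtain ⟨n, P, hP, hc, he⟩ := h₂ b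
  have hfin : ∀ C : Finset K, (∀ c ∈ C, c ∈ L) → ∃ T : Set K, T.Finite ∧
      (∀ c ∈ C, c ∈ DiffTower.cl ((F : Set K) ∪ T)) ∧
      ∀ x ∈ DiffTower.cl ((F : Set K) ∪ T), D x ∈ DiffTower.cl ((F : Set K) ∪ T) := by
    classical
    intro C
    induction C using Finset.induction_on with
    | empty =>
      intro _
      refine ⟨∅, Set.finite_empty, by simp, DiffTower.cl_D hD_add hD_mul ?_⟩
      rintro a (ha | ha)
      · exact DiffTower.subset_cl _ (Or.inl (hF a ha))
      · exact ha.elim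
    | insert c C _ ih =>
      intro hC
      obtain ⟨T, hT, hCT, hDT⟩ := ih (fun x hx => hC x (Finset.mem_insert_of_mem hx))
      have hFT : F ≤ DiffTower.cl ((F : Set K) ∪ T) :=
        fun x hx => DiffTower.subset_cl _ (Or.inl hx)
      obtain ⟨T', hT', hTT', hcT', hDT'⟩ := DiffTower.step hD_add hD_mul hF hT hDT
        (DiffTower.da_mono hFT (h₁ c (hC c (Finset.mem_insert_self _ _))))
      refine ⟨T', hT', ?_, hDT'⟩
      intro x hx
      rcases Finset.mem_insert.1 hx with rfl | hx
      · exact hcT'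
      · exact DiffTower.cl_mono (Set.union_subset_union_right _ hTT') (hCT x hx)
  classical
  obtain ⟨T, hT, hCT, hDT⟩ := hfin (P.support.image (fun m => P.coeff m)) (by
    intro c hcm
    obtain ⟨m, _, rfl⟩ := Finset.mem_image.1 hcm
    exact hc m)
  have hb : IsDifferentiallyAlgebraic D (DiffTower.cl ((F : Set K) ∪ T)) b := by
    refine ⟨n, P, hP, fun m => ?_, he⟩
    by_cases hm : m ∈ P.support
    · exact hCT _ (Finset.mem_image_of_mem _ hm)
    · rw [MvPolynomial.notMem_support_iff.1 hm]
      exact zero_mem _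
  obtain ⟨T', hT', _, hbT', hDT'⟩ := DiffTower.step hD_add hD_mul hF hT hDT hb
  apply DiffTower.da_of_finite hT'
  intro i
  induction i with
  | zero => exact hbT'
  | succ i ih =>
    rw [Function.iterate_succ_apply']
    exact hDT' _ ih
end

section
/- Let K be a field of characteristic 0 equipped with a derivation D, let L be a differential subfield of K, and let b ∈ K. Then b is differentially algebraic over L if and only if Db is differentially algebraic over L. -/
section aux
open MvPolynomial

theorem isDiffAlg_iff_aux {K : Type*} [Field K] (D : K → K) (L : Subfield K) (b : K) :
    IsDifferentiallyAlgebraic D L b ↔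
      ¬ AlgebraicIndependent L (fun i : ℕ => D^[i] b) := by
  rw [algebraicIndependent_iff]
  push Not
  constructor
  · rintro ⟨n, P, hP, hc, he⟩
    have hP' : P ∈ Set.range (MvPolynomial.map L.subtype) := by
      rw [mem_range_map_iff_coeffs_subset]
      intro c hc'
      obtain ⟨m, -, rfl⟩ := MvPolynomial.mem_coeffs_iff.1 hc'
      exact ⟨⟨_, hc m⟩, rfl⟩
    obtain ⟨q, rfl⟩ := hP'
    refine ⟨rename (fun i : Fin (n+1) => (i : ℕ)) q, ?_, ?_⟩
    · rw [aeval_rename]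
      rw [eval_map] at he
      exact he
    · intro h
      apply hP
      have : q = 0 := rename_injective _ Fin.val_injective (by simpa using h)
      simp [this]
  · rintro ⟨p, hp, hp0⟩
    obtain ⟨n, hn⟩ : ∃ n, ∀ i ∈ p.vars, i ≤ n := ⟨p.vars.sup id, fun i hi => Finset.le_sup (f := id) hi⟩
    obtain ⟨q, rfl⟩ := exists_rename_eq_of_vars_subset_range p
      (fun i : Fin (n+1) => (i : ℕ)) Fin.val_injective
      (fun i hi => ⟨⟨i, Nat.lt_succ_of_le (hn i hi)⟩, rfl⟩)
    refine ⟨n, MvPolynomial.map L.subtype q, ?_, ?_, ?_⟩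
    · intro h
      apply hp0
      have : q = 0 := map_injective _ L.subtype.injective (by simpa using h)
      simp [this]
    · intro m
      rw [coeff_map]
      exact (q.coeff m).2
    · rw [aeval_rename] at hp
      rw [eval_map]
      exact hp

/-- The relative algebraic closure is stable under a derivation as soon as it
contains the derivatives of the base field. -/
theorem deriv_mem_algClosure_aux {K : Type*} [Field K] [CharZero K] (D : Derivation ℤ K K)
    (F : Subfield K) (hF : ∀ x ∈ F, IsAlgebraic F (D x)) (a : K) (ha : IsAlgebraic F a) :
    IsAlgebraic F (D a) := by
  have key : ∀ p : Polynomial F, ∃ c : K, IsAlgebraic F c ∧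
      D (Polynomial.aeval a p) = c + Polynomial.aeval a (Polynomial.derivative p) * D a := by
    intro p
    induction p using Polynomial.induction_on' with
    | add p q hp hq =>
      obtain ⟨c, hc, h1⟩ := hp
      obtain ⟨d, hd, h2⟩ := hq
      refine ⟨c + d, hc.add hd, ?_⟩
      simp only [map_add, h1, h2]
      ring
    | monomial n r =>
      refine ⟨a ^ n * D r, (ha.pow n).mul (hF _ r.2), ?_⟩
      simp only [Polynomial.aeval_monomial, Polynomial.derivative_monomial, Derivation.leibniz,
        Derivation.leibniz_pow, smul_eq_mul, map_mul, map_natCast, nsmul_eq_mul]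
      change (r : K) * _ + a ^ n * D (r : K) = _ + (r : K) * _ * _ * _
      ring
  obtain ⟨c, hc, h⟩ := key (minpoly F a)
  have hne : Polynomial.aeval a (Polynomial.derivative (minpoly F a)) ≠ 0 :=
    (minpoly.irreducible ha.isIntegral).separable.aeval_derivative_ne_zero (minpoly.aeval _ _)
  rw [minpoly.aeval, map_zero] at h
  have hal : IsAlgebraic F (Polynomial.aeval a (Polynomial.derivative (minpoly F a))) := by
    have hmem := ((Polynomial.derivative (minpoly F a)).aeval
      (⟨a, mem_algebraicClosure_iff.2 ha⟩ : algebraicClosure F K)).2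
    rw [← IntermediateField.aeval_coe] at hmem
    exact mem_algebraicClosure_iff.1 hmem
  have : D a = -c * (Polynomial.aeval a (Polynomial.derivative (minpoly F a)))⁻¹ := by
    field_simp
    linear_combination -h
  rw [this]
  exact hc.neg.mul hal.inv

theorem deriv_mem_adjoin_aux {K : Type*} [Field K] [CharZero K] (D : Derivation ℤ K K)
    (L : Subfield K) (hL : ∀ x ∈ L, D x ∈ L) (s : Set K)
    (hs : ∀ x ∈ s, IsAlgebraic (IntermediateField.adjoin L s) (D x)) (a : K)
    (ha : IsAlgebraic (IntermediateField.adjoin L s) a) :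
    IsAlgebraic (IntermediateField.adjoin L s) (D a) := by
  refine deriv_mem_algClosure_aux D (IntermediateField.adjoin L s).toSubfield ?_ a ha
  intro x hx
  change IsAlgebraic (IntermediateField.adjoin L s) (D x)
  have alg : ∀ x ∈ IntermediateField.adjoin L s, IsAlgebraic (IntermediateField.adjoin L s) x :=
    fun x hx => isAlgebraic_algebraMap (⟨x, hx⟩ : IntermediateField.adjoin L s)
  change x ∈ IntermediateField.adjoin L s at hx
  induction hx using IntermediateField.adjoin_induction with
  | mem x hx => exact hs x hx
  | algebraMap x =>
    exact alg _ ((IntermediateField.adjoin L s).algebraMap_mem ⟨_, hL _ x.2⟩)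
  | add x y hx hy h1 h2 => rw [map_add]; exact h1.add h2
  | inv x hx h =>
    rw [Derivation.leibniz_inv]
    exact (((alg _ hx).inv.pow 2).neg).mul h
  | mul x y hx hy h1 h2 =>
    rw [Derivation.leibniz]
    exact ((alg _ hx).mul h2).add ((alg _ hy).mul h1)

end aux

/-- `b` is differentially algebraic over `L` if and only if `Db` is differentially
algebraic over `L`. -/
theorem diffAlgebraic_iff_deriv_diffAlgebraic {K : Type*} [Field K] [CharZero K] (D : K → K)
    (hD_add : ∀ x y : K, D (x + y) = D x + D y)
    (hD_mul : ∀ x y : K, D (x * y) = x * D y + y * D x)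
    (L : Subfield K) (hL : ∀ x ∈ L, D x ∈ L) (b : K) :
    IsDifferentiallyAlgebraic D L b ↔ IsDifferentiallyAlgebraic D L (D b) := by
  rw [isDiffAlg_iff_aux, isDiffAlg_iff_aux, not_iff_not]
  constructor
  · intro h
    exact h.comp Nat.succ Nat.succ_injective
  intro hy
  by_contra hx
  let D' : Derivation ℤ K K :=
    Derivation.mk' (AddMonoidHom.mk' D hD_add).toIntLinearMap hD_mul
  set x : ℕ → K := fun i => D^[i] b with hxdef
  have hxs : ∀ i, D (x i) = x (i + 1) := fun i => (Function.iterate_succ_apply' D i b).symm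
  have hys : (fun i : ℕ => D^[i] (D b)) = fun i => x (i + 1) := by
    funext i; exact (Function.iterate_succ_apply D i b).symm
  rw [hys] at hy
  have hex : ∃ n, IsAlgebraic (Algebra.adjoin L (x '' Set.Iio n)) (x n) := by
    by_contra hcon
    push Not at hcon
    apply hx
    have hind : ∀ n, AlgebraicIndepOn L x (Set.Iio n) := by
      intro n
      induction n with
      | zero =>
        have : Set.Iio (0 : ℕ) = ∅ := by ext; simp
        rw [this]
        exact algebraicIndependent_empty_type_iff.2 (algebraMap L K).injective
      | succ n ih =>
        have : Set.Iio (n + 1) = insert n (Set.Iio n) := by ext; simp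
        rw [this]
        exact ih.insert (hcon n)
    rw [algebraicIndependent_iff]
    intro p hp
    obtain ⟨n, hn⟩ : ∃ n, ∀ i ∈ p.vars, i < n :=
      ⟨p.vars.sup id + 1, fun i hi => Nat.lt_succ_of_le (Finset.le_sup (f := id) hi)⟩
    obtain ⟨q, rfl⟩ := MvPolynomial.exists_rename_eq_of_vars_subset_range p
      (fun i : Set.Iio n => (i : ℕ)) Subtype.val_injective (fun i hi => ⟨⟨i, hn i hi⟩, rfl⟩)
    rw [MvPolynomial.aeval_rename] at hp
    rw [algebraicIndependent_iff.1 (hind n) q hp, map_zero]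
  obtain ⟨n, hn⟩ := hex
  rw [← IntermediateField.isAlgebraic_adjoin_iff] at hn
  have hall : ∀ i, IsAlgebraic (IntermediateField.adjoin L (x '' Set.Iio n)) (x i) := by
    have hmem : ∀ i < n, IsAlgebraic (IntermediateField.adjoin L (x '' Set.Iio n)) (x i) :=
      fun i hi => isAlgebraic_algebraMap (⟨x i, IntermediateField.subset_adjoin _ _ ⟨i, hi, rfl⟩⟩ :
        IntermediateField.adjoin L (x '' Set.Iio n))
    have hstep := deriv_mem_adjoin_aux D' L hL (x '' Set.Iio n) (by
      rintro _ ⟨i, hi, rfl⟩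
      change IsAlgebraic _ (D (x i))
      rw [hxs]
      rcases Nat.lt_or_ge (i + 1) n with h | h
      · exact hmem _ h
      · have : i + 1 = n := le_antisymm hi h
        rw [this]; exact hn)
    intro i
    induction i with
    | zero =>
      rcases Nat.eq_zero_or_pos n with h | h
      · rw [← h]
        exact hn
      · exact hmem _ h
    | succ i ih =>
      rw [← hxs]
      exact hstep _ ih
  have hsub : Set.range (fun i => x (i + 1)) ⊆
      (AlgebraicIndependent.matroid L K).closure (x '' Set.Iio n) := by
    rintro _ ⟨i, rfl⟩
    rw [AlgebraicIndependent.matroid_closure_eq, SetLike.mem_coe, Subalgebra.mem_algebraicClosure]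
    exact IntermediateField.isAlgebraic_adjoin_iff.1 (hall _)
  have hI : (AlgebraicIndependent.matroid L K).Indep (Set.range (fun i => x (i + 1))) :=
    AlgebraicIndependent.matroid_indep_iff.2 hy.to_subtype_range
  have hle := hI.encard_le_eRk_of_subset hsub
  rw [Matroid.eRk_closure_eq] at hle
  have hfin : (x '' Set.Iio n).Finite := (Set.finite_Iio n).image _
  have hle' := hle.trans (Matroid.eRk_le_encard _ _)
  rw [(Set.infinite_range_of_injective hy.injective).encard_eq] at hle'
  exact hfin.encard_lt_top.not_ge hle'
end

section
/- Let e : ℂ → ℂ be an entire function with e′ not identically zero, and let g : ℂ → ℂ be meromorphic on ℂ. If both e and g are differentially algebraic, then the composition g ∘ e is meromorphic on ℂ and differentially algebraic. -/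
/-- A function `f : ℂ → ℂ` (meromorphic on `ℂ`) is differentially algebraic over `ℂ(z)`:
there are `n ∈ ℕ` and a nonzero polynomial `P ∈ ℂ[X₀, …, X_{n+1}]` such that
`P (z, f z, f' z, …, f⁽ⁿ⁾ z) = 0` at every point `z` where `f` is analytic. -/
def DifferentiallyAlgebraic (f : ℂ → ℂ) : Prop :=
  ∃ (n : ℕ) (P : MvPolynomial (Fin (n + 2)) ℂ),
    P ≠ 0 ∧ ∀ z : ℂ, AnalyticAt ℂ f z →
      MvPolynomial.eval
        (fun i : Fin (n + 2) => if i.val = 0 then z else iteratedDeriv (i.val - 1) f z) P = 0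

section AlgebraPart
set_option linter.unusedSectionVars false
variable {k A : Type*} [Field k] [CommRing A] [IsDomain A] [Algebra k A] [CharZero A]

theorem isAlg_D_aeval (D : Derivation k A A) (R : Subalgebra k A)
    (hR : ∀ a ∈ R, IsAlgebraic R (D a)) (x : A) (hx : IsAlgebraic R x) (p : Polynomial R) :
    IsAlgebraic R (D (Polynomial.aeval x p) - Polynomial.aeval x (Polynomial.derivative p) * D x) := by
  induction p using Polynomial.induction_on' with
  | add p q hp hq =>
    have := hp.add hq
    convert this using 1
    simp only [map_add]; ring
  | monomial n a =>
    have h : D (Polynomial.aeval x (Polynomial.monomial n a)) -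
        Polynomial.aeval x (Polynomial.derivative (Polynomial.monomial n a)) * D x
        = x ^ n * D (a : A) := by
      simp only [Polynomial.aeval_monomial, Polynomial.derivative_monomial, Derivation.leibniz,
        Derivation.leibniz_pow, smul_eq_mul, map_mul, map_natCast, nsmul_eq_mul]
      have : algebraMap R A a = (a : A) := rfl
      rw [this]; ring
    rw [h]
    exact (hx.pow n).mul (hR a a.2)

theorem isAlg_D (D : Derivation k A A) (R : Subalgebra k A)
    (hR : ∀ a ∈ R, IsAlgebraic R (D a)) (x : A) (hx : IsAlgebraic R x) :
    IsAlgebraic R (D x) := by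
  classical
  have hex : ∃ n : ℕ, ∃ p : Polynomial R, p ≠ 0 ∧ Polynomial.aeval x p = 0 ∧ p.natDegree = n := by
    obtain ⟨p, hp, h⟩ := hx
    exact ⟨_, p, hp, h, rfl⟩
  obtain ⟨p, hp0, hpx, hpn⟩ := Nat.find_spec hex
  have hdeg : p.natDegree ≠ 0 := by
    intro h
    rw [Polynomial.eq_C_of_natDegree_eq_zero h] at hpx hp0
    simp only [Polynomial.aeval_C] at hpx
    apply hp0
    have : p.coeff 0 = 0 := Subtype.ext hpx
    rw [this]; simp
  have hd : Polynomial.aeval x (Polynomial.derivative p) ≠ 0 := by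
    intro h
    have hlt := Polynomial.natDegree_derivative_lt hdeg
    rw [hpn] at hlt
    refine Nat.find_min hex hlt ⟨_, ?_, h, rfl⟩
    intro h0
    exact hdeg (Polynomial.derivative_eq_zero.1 h0)
  have h1 := isAlg_D_aeval D R hR x hx p
  rw [hpx, map_zero, zero_sub] at h1
  have h2 : IsAlgebraic R (Polynomial.aeval x (Polynomial.derivative p)) := by
    have : ∀ q : Polynomial R, IsAlgebraic R (Polynomial.aeval x q) := by
      intro q
      induction q using Polynomial.induction_on' with
      | add p q hp hq => rw [map_add]; exact hp.add hq
      | monomial n a =>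
        rw [Polynomial.aeval_monomial]
        exact (isAlgebraic_algebraMap a).mul (hx.pow n)
    exact this _
  exact IsAlgebraic.of_mul (mem_nonZeroDivisors_of_ne_zero hd) h2 (by simpa using h1.neg)

theorem isAlg_D_adjoin (D : Derivation k A A) (S : Set A)
    (hS : ∀ a ∈ S, IsAlgebraic (Algebra.adjoin k S) (D a)) (x : A)
    (hx : IsAlgebraic (Algebra.adjoin k S) x) :
    IsAlgebraic (Algebra.adjoin k S) (D x) := by
  refine isAlg_D D _ (fun a ha => ?_) x hx
  induction ha using Algebra.adjoin_induction with
  | mem x hx => exact hS x hx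
  | algebraMap r => simpa using isAlgebraic_zero
  | add x y _ _ h1 h2 => rw [map_add]; exact h1.add h2
  | mul x y hx hy h1 h2 =>
    rw [Derivation.leibniz]
    have h3 : IsAlgebraic (Algebra.adjoin k S) x :=
      isAlgebraic_algebraMap (⟨x, hx⟩ : Algebra.adjoin k S)
    have h4 : IsAlgebraic (Algebra.adjoin k S) y :=
      isAlgebraic_algebraMap (⟨y, hy⟩ : Algebra.adjoin k S)
    exact (h3.mul h2).add (h4.mul h1)

theorem D_eq_zero_of_alg (D : Derivation k A A) [CharZero k] (x : A) (hx : IsAlgebraic k x) : D x = 0 := by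
  have hi : IsIntegral k x := hx.isIntegral
  have h1 : D (Polynomial.aeval x (minpoly k x)) =
      Polynomial.aeval x (Polynomial.derivative (minpoly k x)) • D x := by
    exact D.map_aeval _ _
  rw [minpoly.aeval, map_zero, smul_eq_mul] at h1
  rcases mul_eq_zero.1 h1.symm with h | h
  · exfalso
    have hirr := minpoly.irreducible hi
    exact (hirr.separable).aeval_derivative_ne_zero (minpoly.aeval k x) h
  · exact h

theorem isAlg_mono {S T : Set A} (h : S ⊆ T) {x : A} (hx : IsAlgebraic (Algebra.adjoin k S) x) :
    IsAlgebraic (Algebra.adjoin k T) x := by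
  refine hx.adjoin_of_forall_isAlgebraic fun y hy => ?_
  exact (hy.2 (h hy.1)).elim

theorem exists_alg_of_dep (x : ℕ → A) (n : ℕ)
    (h : ¬ AlgebraicIndependent k (fun i : Fin n => x i)) :
    ∃ i < n, IsAlgebraic (Algebra.adjoin k (x '' {j | j < i})) (x i) := by
  by_contra! hc
  apply h
  have key : ∀ m ≤ n, AlgebraicIndepOn k x {j | j < m} := by
    intro m hm
    induction m with
    | zero =>
      have : {j : ℕ | j < 0} = ∅ := by ext; simp
      rw [this]
      have : Function.Injective (algebraMap k A) := (algebraMap k A).injective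
      exact algebraicIndependent_empty_type_iff.mpr this
    | succ m ih =>
      have : {j : ℕ | j < m + 1} = insert m {j | j < m} := by ext; simp; omega
      rw [this]
      exact (ih (by omega)).insert (hc m (by omega))
  have := key n le_rfl
  exact this.comp (fun i : Fin n => (⟨i, i.2⟩ : {j | j < n})) (fun a b hab => by
    ext; simpa using hab)

theorem dep_of_alg (S : Set A) (hS : S.Finite) (x : ℕ → A)
    (hx : ∀ i, IsAlgebraic (Algebra.adjoin k S) (x i)) :
    ∃ n, ∀ m ≥ n, ¬ AlgebraicIndependent k (fun i : Fin m => x i) := by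
  refine ⟨S.ncard + 1, fun m hm hind => ?_⟩
  have hI : (AlgebraicIndependent.matroid k A).Indep (Set.range fun i : Fin m => x i) :=
    AlgebraicIndependent.matroid_indep_iff.mpr hind.to_subtype_range
  have hsub : Set.range (fun i : Fin m => x i) ⊆ (AlgebraicIndependent.matroid k A).closure S := by
    rw [AlgebraicIndependent.matroid_closure_eq]
    rintro _ ⟨i, rfl⟩
    exact hx i
  have h1 := hI.encard_le_eRk_of_subset hsub
  rw [Matroid.eRk_closure_eq] at h1
  have h2 := h1.trans ((AlgebraicIndependent.matroid k A).eRk_le_encard S)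
  rw [← Set.image_univ, hind.injective.encard_image, Set.encard_univ, ← hS.cast_ncard_eq] at h2
  simp at h2
  have : m ≤ S.ncard := by exact_mod_cast h2
  omega

/-- Algebraic core. -/
theorem core (D : Derivation k A A) [CharZero k] (z : A) (hz : D z ≠ 0) (hz1 : D z = 1)
    (E H : ℕ → A)
    (hE : ∀ i, D (E i) = E (i + 1)) (hE1 : E 1 ≠ 0) (hH : ∀ i, D (H i) = H (i + 1) * E 1)
    (n m : ℕ)
    (h1 : ¬ AlgebraicIndependent k (fun i : Fin n => if i.val = 0 then z else E (i.val - 1)))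
    (h2 : ¬ AlgebraicIndependent k (fun i : Fin m => if i.val = 0 then E 0 else H (i.val - 1)))
    (F : ℕ → A) (hF0 : F 0 = H 0) (hF : ∀ i, D (F i) = F (i + 1)) :
    ∃ N, ¬ AlgebraicIndependent k (fun i : Fin (N + 2) => if i.val = 0 then z else F (i.val - 1)) := by
  obtain ⟨i, -, hi⟩ := exists_alg_of_dep (fun j => if j = 0 then z else E (j - 1)) n h1
  obtain ⟨l, -, hl⟩ := exists_alg_of_dep (fun j => if j = 0 then E 0 else H (j - 1)) m h2
  have transc : ∀ y : A, D y ≠ 0 → ∀ x : ℕ → A,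
      ¬ IsAlgebraic (Algebra.adjoin k (x '' {j | j < 0})) y := by
    intro y hy x hx
    have : x '' {j : ℕ | j < 0} = ∅ := by simp
    rw [this] at hx
    rw [Algebra.adjoin_empty] at hx
    have hx' : IsAlgebraic k y := Subalgebra.isAlgebraic_of_isAlgebraic_bot hx
    exact hy (D_eq_zero_of_alg D y hx')
  obtain _ | i := i
  · exact (transc z hz _ hi).elim
  obtain _ | l := l
  · exact (transc (E 0) (by rw [hE]; exact hE1) _ hl).elim
  simp only [Nat.add_eq_zero_iff, one_ne_zero, and_false, if_false, Nat.add_sub_cancel] at hi hl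
  set S1 : Set A := (fun j => if j = 0 then z else E (j - 1)) '' {j | j < i + 1} with hS1
  set S2 : Set A := (fun j => if j = 0 then E 0 else H (j - 1)) '' {j | j < l + 1} with hS2
  have hmem : ∀ (S : Set A) (y : A), y ∈ S → IsAlgebraic (Algebra.adjoin k S) y := fun S y hy =>
    isAlgebraic_algebraMap (⟨y, Algebra.subset_adjoin hy⟩ : Algebra.adjoin k S)
  have hES1 : ∀ j < i, E j ∈ S1 := fun j hj => ⟨j + 1, by simpa using hj, by simp⟩
  have hHS2 : ∀ j < l, H j ∈ S2 := fun j hj => ⟨j + 1, by simpa using hj, by simp⟩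
  have hzS1 : z ∈ S1 := ⟨0, by simp, by simp⟩
  have D1 : ∀ x, IsAlgebraic (Algebra.adjoin k S1) x → IsAlgebraic (Algebra.adjoin k S1) (D x) := by
    refine isAlg_D_adjoin D S1 ?_
    rintro _ ⟨j, hj, rfl⟩
    obtain _ | j := j
    · simp only [if_true, hz1]; exact isAlgebraic_one
    · simp only [Nat.add_eq_zero_iff, one_ne_zero, and_false, if_false, Nat.add_sub_cancel, hE]
      have hj' : j + 1 ≤ i := by simpa using hj
      rcases hj'.lt_or_eq with h | h
      · exact hmem _ _ (hES1 _ h)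
      · rw [h]; exact hi
  have hEalg : ∀ j, IsAlgebraic (Algebra.adjoin k S1) (E j) := by
    intro j
    induction j with
    | zero =>
      rcases Nat.eq_zero_or_pos i with h | h
      · subst h; exact hi
      · exact hmem _ _ (hES1 _ h)
    | succ j ih => rw [← hE]; exact D1 _ ih
  set S := S1 ∪ S2
  have hEalg' : ∀ j, IsAlgebraic (Algebra.adjoin k S) (E j) := fun j =>
    isAlg_mono Set.subset_union_left (hEalg j)
  have D2 : ∀ x, IsAlgebraic (Algebra.adjoin k S) x → IsAlgebraic (Algebra.adjoin k S) (D x) := by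
    refine isAlg_D_adjoin D S ?_
    rintro x (hx | ⟨j, hj, rfl⟩)
    · exact isAlg_mono Set.subset_union_left (D1 x (hmem _ _ hx))
    obtain _ | j := j
    · simp only [if_true, hE]; exact hEalg' _
    · simp only [Nat.add_eq_zero_iff, one_ne_zero, and_false, if_false, Nat.add_sub_cancel, hH]
      refine IsAlgebraic.mul ?_ (hEalg' 1)
      have hj' : j + 1 ≤ l := by simpa using hj
      rcases hj'.lt_or_eq with h | h
      · exact hmem _ _ (Or.inr (hHS2 _ h))
      · rw [h]; exact isAlg_mono Set.subset_union_right hl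
  have hFalg : ∀ j, IsAlgebraic (Algebra.adjoin k S) (F j) := by
    intro j
    induction j with
    | zero =>
      rw [hF0]
      rcases Nat.eq_zero_or_pos l with h | h
      · subst h; exact isAlg_mono Set.subset_union_right hl
      · exact hmem _ _ (Or.inr (hHS2 _ h))
    | succ j ih => rw [← hF]; exact D2 _ ih
  have hfin : S.Finite := ((Set.finite_lt_nat _).image _).union ((Set.finite_lt_nat _).image _)
  obtain ⟨N, hN⟩ := dep_of_alg S hfin (fun j => if j = 0 then z else F (j - 1)) (by
    intro j
    split_ifs
    · exact hmem _ _ (Or.inl hzS1)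
    · exact hFalg _)
  exact ⟨N, hN (N + 2) (by omega)⟩

end AlgebraPart

section AnalyticPart
open PowerSeries Topology Filter

/-- Functions analytic at a point. -/
def anaSub (z0 : ℂ) : Subalgebra ℂ (ℂ → ℂ) where
  carrier := {f | AnalyticAt ℂ f z0}
  mul_mem' ha hb := AnalyticAt.mul ha hb
  add_mem' ha hb := AnalyticAt.add ha hb
  algebraMap_mem' r := by
    change AnalyticAt ℂ (fun _ => r) z0
    exact analyticAt_const

/-- Taylor series at a point. -/
noncomputable def ts (z0 : ℂ) (f : ℂ → ℂ) : ℂ⟦X⟧ :=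
  PowerSeries.mk fun n => iteratedDeriv n f z0 / (n.factorial : ℂ)

theorem ts_congr {z0 : ℂ} {f g : ℂ → ℂ} (h : f =ᶠ[𝓝 z0] g) : ts z0 f = ts z0 g := by
  ext n
  simp only [ts, coeff_mk]
  rw [h.iteratedDeriv_eq n]

theorem ts_deriv (z0 : ℂ) (f : ℂ → ℂ) : ts z0 (deriv f) = derivative ℂ (ts z0 f) := by
  ext n
  rw [coeff_derivative]
  simp only [ts, coeff_mk]
  rw [iteratedDeriv_succ', Nat.factorial_succ]
  have h1 : (n.factorial : ℂ) ≠ 0 := by exact_mod_cast n.factorial_ne_zero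
  have h2 : (n + 1 : ℂ) ≠ 0 := by exact_mod_cast n.succ_ne_zero
  push_cast
  field_simp

theorem ts_mul {z0 : ℂ} {f g : ℂ → ℂ} (hf : AnalyticAt ℂ f z0) (hg : AnalyticAt ℂ g z0) :
    ts z0 (f * g) = ts z0 f * ts z0 g := by
  ext n
  rw [PowerSeries.coeff_mul]
  simp only [ts, coeff_mk]
  rw [iteratedDeriv_mul hf.contDiffAt hg.contDiffAt,
    Finset.Nat.sum_antidiagonal_eq_sum_range_succ
      (fun i j => iteratedDeriv i f z0 / (i.factorial : ℂ) * (iteratedDeriv j g z0 / (j.factorial : ℂ))),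
    Finset.sum_div]
  refine Finset.sum_congr rfl fun i hi => ?_
  have hi' : i ≤ n := by simpa [Nat.lt_succ_iff] using hi
  rw [Nat.cast_choose ℂ hi']
  have h1 : (n.factorial : ℂ) ≠ 0 := by exact_mod_cast n.factorial_ne_zero
  have h2 : (i.factorial : ℂ) ≠ 0 := by exact_mod_cast i.factorial_ne_zero
  have h3 : ((n - i).factorial : ℂ) ≠ 0 := by exact_mod_cast (n - i).factorial_ne_zero
  field_simp

theorem ts_const (z0 r : ℂ) : ts z0 (fun _ => r) = algebraMap ℂ ℂ⟦X⟧ r := by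
  ext n
  simp only [ts, coeff_mk, iteratedDeriv_const, PowerSeries.algebraMap_apply, coeff_C]
  split_ifs with h
  · subst h; simp
  · simp

theorem ts_eq_zero_iff {z0 : ℂ} {f : ℂ → ℂ} (hf : AnalyticAt ℂ f z0) :
    ts z0 f = 0 ↔ ∀ᶠ z in 𝓝 z0, f z = 0 := by
  constructor
  · intro h
    have h1 := hf.hasFPowerSeriesAt
    have h2 : (fun n : ℕ => iteratedDeriv n f z0 / (n.factorial : ℂ)) = fun _ => 0 := by
      ext n
      have := congrArg (coeff n) h
      simpa only [ts, coeff_mk, map_zero] using this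
    rw [h2] at h1
    have h3 : FormalMultilinearSeries.ofScalars ℂ (fun _ : ℕ => (0 : ℂ)) = 0 := by
      ext; simp [FormalMultilinearSeries.ofScalars]
    rw [h3] at h1
    exact h1.eventually_eq_zero
  · intro h
    have : f =ᶠ[𝓝 z0] fun _ => 0 := h
    rw [ts_congr this, ts_const, map_zero]

/-- Taylor series as an algebra homomorphism. -/
noncomputable def tsHom (z0 : ℂ) : anaSub z0 →ₐ[ℂ] ℂ⟦X⟧ where
  toFun f := ts z0 f.1
  map_one' := by
    have := ts_const z0 1
    rw [map_one] at this
    exact this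
  map_mul' f g := ts_mul f.2 g.2
  map_zero' := by
    have := ts_const z0 0
    rw [map_zero] at this
    exact this
  map_add' f g := by
    ext n
    simp only [ts, coeff_mk, map_add]
    have hf : AnalyticAt ℂ f.1 z0 := f.2
    have hg : AnalyticAt ℂ g.1 z0 := g.2
    rw [← add_div, ← iteratedDeriv_add hf.contDiffAt hg.contDiffAt]
    rfl
  commutes' r := ts_const z0 r

theorem eval_apply_aux {ι : Type*} (z0 : ℂ) (x : ι → anaSub z0) (P : MvPolynomial ι ℂ) (z : ℂ) :
    (MvPolynomial.aeval x P).1 z = MvPolynomial.eval (fun i => (x i).1 z) P := by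
  induction P using MvPolynomial.induction_on with
  | C a => simp
  | add p q hp hq => simp only [map_add, ← hp, ← hq]; rfl
  | mul_X p i hp => simp only [map_mul, MvPolynomial.aeval_X, MvPolynomial.eval_X, ← hp]; rfl

theorem aeval_ts_eq_zero_iff {ι : Type*} (z0 : ℂ) (x : ι → ℂ → ℂ) (hx : ∀ i, AnalyticAt ℂ (x i) z0)
    (P : MvPolynomial ι ℂ) :
    MvPolynomial.aeval (fun i => ts z0 (x i)) P = 0 ↔
      ∀ᶠ z in 𝓝 z0, MvPolynomial.eval (fun i => x i z) P = 0 := by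
  let y : ι → anaSub z0 := fun i => ⟨x i, hx i⟩
  have h1 : MvPolynomial.aeval (fun i => ts z0 (x i)) P = tsHom z0 (MvPolynomial.aeval y P) := by
    rw [MvPolynomial.comp_aeval_apply]; rfl
  rw [h1]
  refine (ts_eq_zero_iff (MvPolynomial.aeval y P).2).trans ?_
  simp only [eval_apply_aux]
  rfl

theorem dep_iff {ι : Type*} (z0 : ℂ) (x : ι → ℂ → ℂ) (hx : ∀ i, AnalyticAt ℂ (x i) z0) :
    (¬ AlgebraicIndependent ℂ (fun i => ts z0 (x i))) ↔ ∃ P : MvPolynomial ι ℂ, P ≠ 0 ∧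
      ∀ᶠ z in 𝓝 z0, MvPolynomial.eval (fun i => x i z) P = 0 := by
  rw [algebraicIndependent_iff]
  simp only [aeval_ts_eq_zero_iff z0 x hx]
  push Not
  exact exists_congr fun P => and_comm

theorem analyticAt_iteratedDeriv {f : ℂ → ℂ} {z : ℂ} (hf : AnalyticAt ℂ f z) (n : ℕ) :
    AnalyticAt ℂ (iteratedDeriv n f) z := by
  rw [iteratedDeriv_eq_iterate]
  exact hf.iterated_deriv n

theorem analyticAt_eval {ι : Type*} (x : ι → ℂ → ℂ) (z : ℂ) (hx : ∀ i, AnalyticAt ℂ (x i) z)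
    (P : MvPolynomial ι ℂ) : AnalyticAt ℂ (fun w => MvPolynomial.eval (fun i => x i w) P) z := by
  let y : ι → anaSub z := fun i => ⟨x i, hx i⟩
  have h : AnalyticAt ℂ (MvPolynomial.aeval y P).1 z := (MvPolynomial.aeval y P).2
  convert h using 1
  ext w
  rw [eval_apply_aux]

theorem isPreconnected_analytic {f : ℂ → ℂ} (hf : MeromorphicOn f Set.univ) :
    IsPreconnected {z | AnalyticAt ℂ f z} := by
  have hc : Set.Countable {z | AnalyticAt ℂ f z}ᶜ := by
    have h : ∀ z : ℂ, ∃ U ∈ 𝓝 z, ({z | AnalyticAt ℂ f z}ᶜ ∩ U).Countable := by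
      intro z
      have h1 := (hf z (Set.mem_univ z)).eventually_analyticAt
      rw [eventually_nhdsWithin_iff] at h1
      refine ⟨_, h1, (Set.countable_singleton z).mono ?_⟩
      rintro w ⟨hw1, hw2⟩
      by_contra hne
      exact hw1 (hw2 hne)
    choose U hU hUc using h
    obtain ⟨t, ht, hcov⟩ := TopologicalSpace.countable_cover_nhds hU
    refine (ht.biUnion fun z _ => hUc z).mono fun w hw => ?_
    have hw2 : w ∈ ⋃ x ∈ t, U x := by rw [hcov]; trivial
    simp only [Set.mem_iUnion] at hw2 ⊢
    obtain ⟨x, hx, hwx⟩ := hw2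
    exact ⟨x, hx, hw, hwx⟩
  have := (hc.isConnected_compl_of_one_lt_rank (by simp)).isPreconnected
  rwa [compl_compl] at this

end AnalyticPart

theorem comp_meromorphic_diffAlgebraic (e g : ℂ → ℂ)
    (he : Differentiable ℂ e) (he' : ∃ z : ℂ, deriv e z ≠ 0)
    (hg : MeromorphicOn g Set.univ)
    (hea : DifferentiallyAlgebraic e) (hga : DifferentiallyAlgebraic g) :
    MeromorphicOn (g ∘ e) Set.univ ∧ DifferentiallyAlgebraic (g ∘ e) := by
  have hean : ∀ z, AnalyticAt ℂ e z := fun z => he.analyticAt z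
  have hmer : MeromorphicOn (g ∘ e) Set.univ := fun z _ =>
    (hg (e z) (Set.mem_univ _)).comp_analyticAt (hean z)
  refine ⟨hmer, ?_⟩
  obtain ⟨z1, hz1⟩ := he'
  obtain ⟨z0, hz0, hgz0⟩ : ∃ z0, deriv e z0 ≠ 0 ∧ AnalyticAt ℂ g (e z0) := by
    have h1 : ∀ᶠ z in nhdsWithin z1 {z1}ᶜ, AnalyticAt ℂ g (e z) :=
      ((he z1).hasDerivAt.tendsto_nhdsNE hz1).eventually
        (hg (e z1) (Set.mem_univ _)).eventually_analyticAt
    have h2 : ∀ᶠ z in nhdsWithin z1 {z1}ᶜ, deriv e z ≠ 0 :=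
      ((hean z1).deriv.continuousAt.eventually_ne hz1).filter_mono nhdsWithin_le_nhds
    exact (h2.and h1).exists
  have hfz0 : AnalyticAt ℂ (g ∘ e) z0 := hgz0.comp (hean z0)
  have hgnear : ∀ᶠ z in nhds z0, AnalyticAt ℂ g (e z) :=
    (hean z0).continuousAt.eventually hgz0.eventually_analyticAt
  obtain ⟨n, P, hP, hPe⟩ := hea
  obtain ⟨m, Q, hQ, hQg⟩ := hga
  have hsplit : ∀ (a : ℂ → ℂ) (b : ℕ → ℂ → ℂ) (j : ℕ),
      (if j = 0 then ts z0 a else ts z0 (b (j - 1))) =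
        ts z0 (fun z => if j = 0 then a z else b (j - 1) z) := by
    intro a b j; split_ifs <;> rfl
  have hana : ∀ (a : ℂ → ℂ) (b : ℕ → ℂ → ℂ), AnalyticAt ℂ a z0 → (∀ j, AnalyticAt ℂ (b j) z0) →
      ∀ j : ℕ, AnalyticAt ℂ (fun z => if j = 0 then a z else b (j - 1) z) z0 := by
    intro a b ha hb j
    split_ifs
    · exact ha
    · exact hb _
  have hH : ∀ j, AnalyticAt ℂ (iteratedDeriv j g ∘ e) z0 := fun j =>
    (analyticAt_iteratedDeriv hgz0 j).comp (hean z0)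
  have hDz : PowerSeries.derivative ℂ (ts z0 (fun z => z)) = 1 := by
    rw [← ts_deriv]
    have : deriv (fun z : ℂ => z) = fun _ => 1 := by ext z; simp
    rw [this, ts_const, map_one]
  have : CharZero (PowerSeries ℂ) :=
    charZero_of_injective_algebraMap (algebraMap ℂ (PowerSeries ℂ)).injective
  obtain ⟨N, hN⟩ := core (PowerSeries.derivative ℂ) (ts z0 (fun z => z))
    (by rw [hDz]; exact one_ne_zero) hDz
    (fun j => ts z0 (iteratedDeriv j e)) (fun j => ts z0 (iteratedDeriv j g ∘ e))
    (by intro j; rw [← ts_deriv, iteratedDeriv_succ])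
    (by
      intro h
      rw [ts_eq_zero_iff (analyticAt_iteratedDeriv (hean z0) 1)] at h
      have := h.self_of_nhds
      rw [iteratedDeriv_one] at this
      exact hz0 this)
    (by
      intro j
      rw [← ts_deriv, ← ts_mul (hH _) (analyticAt_iteratedDeriv (hean z0) 1)]
      apply ts_congr
      filter_upwards [hgnear] with z hz
      rw [deriv_comp z (analyticAt_iteratedDeriv hz j).differentiableAt (he z), Pi.mul_apply,
        iteratedDeriv_one, iteratedDeriv_succ]
      rfl)
    (n + 2) (m + 2)
    (by
      simp only [hsplit _ (fun j => iteratedDeriv j e)]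
      rw [dep_iff z0 (fun (i : Fin (n + 2)) z => if i.val = 0 then z else iteratedDeriv (i.val - 1) e z)
        (fun i => hana _ (fun j => iteratedDeriv j e) analyticAt_id
          (analyticAt_iteratedDeriv (hean z0)) i.val)]
      exact ⟨P, hP, Filter.Eventually.of_forall fun z => hPe z (hean z)⟩)
    (by
      simp only [hsplit _ (fun j => iteratedDeriv j g ∘ e)]
      rw [dep_iff z0 (fun (i : Fin (m + 2)) z => if i.val = 0 then iteratedDeriv 0 e z
          else (iteratedDeriv (i.val - 1) g ∘ e) z)
        (fun i => hana _ (fun j => iteratedDeriv j g ∘ e) (analyticAt_iteratedDeriv (hean z0) 0)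
          hH i.val)]
      refine ⟨Q, hQ, ?_⟩
      filter_upwards [hgnear] with z hz
      have := hQg (e z) hz
      simpa only [iteratedDeriv_zero, Function.comp] using this)
    (fun j => ts z0 (iteratedDeriv j (g ∘ e)))
    (by simp only [iteratedDeriv_zero])
    (by intro j; rw [← ts_deriv, iteratedDeriv_succ])
  simp only [hsplit _ (fun j => iteratedDeriv j (g ∘ e))] at hN
  rw [dep_iff z0 (fun (i : Fin (N + 2)) z => if i.val = 0 then z
      else iteratedDeriv (i.val - 1) (g ∘ e) z)
    (fun i => hana _ (fun j => iteratedDeriv j (g ∘ e)) analyticAt_id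
      (analyticAt_iteratedDeriv hfz0) i.val)] at hN
  obtain ⟨R, hR, hR0⟩ := hN
  refine ⟨N, R, hR, ?_⟩
  have hana2 : AnalyticOnNhd ℂ (fun z => MvPolynomial.eval
        (fun i : Fin (N + 2) => if i.val = 0 then z else iteratedDeriv (i.val - 1) (g ∘ e) z) R)
      {z | AnalyticAt ℂ (g ∘ e) z} := by
    intro z hz
    refine analyticAt_eval (fun (i : Fin (N + 2)) z => if i.val = 0 then z
      else iteratedDeriv (i.val - 1) (g ∘ e) z) z (fun i => ?_) R
    split_ifs
    · exact analyticAt_id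
    · exact analyticAt_iteratedDeriv hz _
  have hz := hana2.eqOn_zero_of_preconnected_of_eventuallyEq_zero
    (isPreconnected_analytic hmer) hfz0 hR0
  exact fun z h => hz h
end

section
/- The real Gamma function Γ : ℝ → ℝ is not differentially algebraic over the field ℝ(x) of real rational functions: there do not exist n ∈ ℕ and a nonzero polynomial P ∈ ℝ[X₀, X₁, …, X_{n+1}] such that P(x, Γ(x), Γ′(x), …, Γ⁽ⁿ⁾(x)) = 0 for all real x > 0. -/
namespace HolderGamma

open MvPolynomial OrderDual Filter

/-- Polynomials in countably many variables `Y_k` with coefficients in `ℂ[x]`. -/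
abbrev GS := MvPolynomial ℕᵒᵈ (Polynomial ℂ)

/-- Lexicographic order, larger index is larger. -/
noncomputable abbrev mo : MonomialOrder ℕᵒᵈ := MonomialOrder.lex

/-- Image of a variable under the shift. -/
noncomputable def shX (k : ℕᵒᵈ) : GS :=
  C Polynomial.X * X k + C ((ofDual k : ℕ) : Polynomial ℂ) * X (toDual (ofDual k - 1))

/-- The shift. -/
noncomputable def sh : GS →+* GS :=
  eval₂Hom (C.comp (Polynomial.compRingHom (Polynomial.X + 1))) shX

/-- Evaluation. -/
noncomputable def ev (x : ℂ) (y : ℕ → ℂ) : GS →+* ℂ :=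
  eval₂Hom (Polynomial.evalRingHom x) (fun k => y (ofDual k))

/-- The linear change of variables. -/
noncomputable def lin (x : ℂ) (y : ℕ → ℂ) (k : ℕ) : ℂ := x * y k + k * y (k - 1)

lemma ev_sh (x : ℂ) (y : ℕ → ℂ) (P : GS) : ev x y (sh P) = ev (x + 1) (lin x y) P := by
  have : (ev x y).comp sh = ev (x + 1) (lin x y) := by
    apply MvPolynomial.ringHom_ext
    · intro r
      simp [ev, sh]
    · intro i
      simp [ev, sh, shX, lin]
  rw [← this]; rfl

lemma lin_surj {γ : ℂ} (h : γ ≠ 0) (z : ℕ → ℂ) : ∃ y, lin γ y = z := by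
  refine ⟨fun k => Nat.rec (z 0 / γ) (fun k yk => (z (k + 1) - (k + 1) * yk) / γ) k, ?_⟩
  funext k
  cases k with
  | zero =>
    simp only [lin, Nat.cast_zero, zero_mul, add_zero]
    exact mul_div_cancel₀ _ h
  | succ k =>
    simp only [lin, Nat.add_sub_cancel]
    rw [mul_div_cancel₀ _ h]
    push_cast
    ring

lemma lin_zero (x : ℂ) (y : ℕ → ℂ) : lin x y 0 = x * y 0 := by simp [lin]

lemma lin_surj_zero (z : ℕ → ℂ) (hz : z 0 = 0) : ∃ y, lin 0 y = z := by
  refine ⟨fun k => z (k + 1) / (k + 1), ?_⟩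
  funext k
  cases k with
  | zero => simp [lin, hz]
  | succ k =>
    have : (k : ℂ) + 1 ≠ 0 := by exact_mod_cast k.succ_ne_zero
    simp only [lin]; push_cast; simp; field_simp

lemma map_eq_zero_of_ev {γ : ℂ} {P : GS} (h : ∀ y, ev γ y P = 0) (d : ℕᵒᵈ →₀ ℕ) :
    (P.coeff d).eval γ = 0 := by
  have : MvPolynomial.map (Polynomial.evalRingHom γ) P = 0 := by
    apply MvPolynomial.funext
    intro y
    have := h (fun k => y (toDual k))
    simp only [ev, coe_eval₂Hom] at this
    rw [eval_map]
    simpa using this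
  have h2 := congrArg (coeff d) this
  rw [coeff_map] at h2
  simpa using h2

lemma eq_zero_of_ev {P : GS} (h : ∀ x y, ev x y P = 0) : P = 0 := by
  ext1 d
  apply Polynomial.funext
  intro x
  simpa using map_eq_zero_of_ev (h x) d

lemma dvd_of_ev {γ : ℂ} {P : GS} (h : ∀ y, ev γ y P = 0) :
    C (Polynomial.X - Polynomial.C γ) ∣ P := by
  rw [C_dvd_iff_dvd_coeff]
  intro d
  exact Polynomial.dvd_iff_isRoot.2 (map_eq_zero_of_ev h d)

lemma X_dvd_of_ev {P : GS} (h : ∀ x y, y 0 = 0 → ev x y P = 0) :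
    (X (toDual 0) : GS) ∣ P := by
  let φ : GS →+* GS := eval₂Hom C (fun k => if k = toDual 0 then 0 else X k)
  have h1 : φ P = 0 := by
    apply eq_zero_of_ev
    intro x y
    have : (ev x y).comp φ = ev x (fun k => if k = 0 then 0 else y k) := by
      apply MvPolynomial.ringHom_ext
      · intro r
        simp [ev, φ]
      · intro i
        by_cases hi : i = toDual 0
        · subst hi; simp [ev, φ]
        · have hi' : ofDual i ≠ 0 := hi
          have hi2 : i ≠ 0 := hi
          simp [ev, φ, hi2]
    have h2 : ev x y (φ P) = _ := congrFun (congrArg DFunLike.coe this) P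
    rw [h2]
    exact h _ _ (by simp)
  let I : Ideal GS := Ideal.span {X (toDual 0)}
  have h2 : (Ideal.Quotient.mk I).comp φ = Ideal.Quotient.mk I := by
    apply MvPolynomial.ringHom_ext
    · intro r
      simp [φ]
    · intro i
      by_cases hi : i = toDual 0
      · subst hi
        simp only [φ, RingHom.comp_apply, coe_eval₂Hom, eval₂_X, if_true, map_zero]
        symm
        rw [Ideal.Quotient.eq_zero_iff_mem]
        exact Ideal.mem_span_singleton_self _
      · have hi2 : i ≠ 0 := hi
        simp [φ, hi2]
  have h3 : Ideal.Quotient.mk I P = 0 := by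
    rw [← h2, RingHom.comp_apply, h1, map_zero]
  rw [Ideal.Quotient.eq_zero_iff_mem] at h3
  exact Ideal.mem_span_singleton.1 h3

lemma degree_shX (k : ℕᵒᵈ) : mo.degree (shX k) = Finsupp.single k 1 ∧
    mo.leadingCoeff (shX k) = Polynomial.X := by
  have hX : (C Polynomial.X : GS) ≠ 0 := by simp
  have hd : mo.degree (C Polynomial.X * X k : GS) = Finsupp.single k 1 := by
    rw [MonomialOrder.degree_mul hX (X_ne_zero k), MonomialOrder.degree_C,
      MonomialOrder.degree_X, zero_add]
  have hl : mo.leadingCoeff (C Polynomial.X * X k : GS) = Polynomial.X := by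
    rw [MonomialOrder.leadingCoeff_mul, MonomialOrder.leadingCoeff_C,
      MonomialOrder.leadingCoeff_X, mul_one]
  by_cases hk : ofDual k = 0
  · simp only [shX, hk, Nat.cast_zero, map_zero, zero_mul, add_zero]
    exact ⟨hd, hl⟩
  · have hlt : mo.toSyn (mo.degree (C ((ofDual k : ℕ) : Polynomial ℂ) *
        X (toDual (ofDual k - 1)) : GS)) < mo.toSyn (mo.degree (C Polynomial.X * X k : GS)) := by
      rw [hd, MonomialOrder.degree_mul (by simpa using hk) (X_ne_zero _), MonomialOrder.degree_C,
        MonomialOrder.degree_X, zero_add, MonomialOrder.lex_lt_iff, Finsupp.Lex.single_lt_iff]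
      rw [← ofDual_lt_ofDual]
      simp only [ofDual_toDual]
      omega
    rw [shX]
    exact ⟨(MonomialOrder.degree_add_of_lt hlt).trans hd,
      (MonomialOrder.leadingCoeff_add_of_lt hlt).trans hl⟩

lemma degree_sh_monomial (a : ℕᵒᵈ →₀ ℕ) (c : Polynomial ℂ) (hc : c ≠ 0) :
    mo.degree (sh (monomial a c)) = a ∧
    mo.leadingCoeff (sh (monomial a c)) = c.comp (Polynomial.X + 1) * Polynomial.X ^ a.degree := by
  have hne : ∀ k, shX k ≠ 0 := by
    intro k hk
    have := (degree_shX k).2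
    rw [hk] at this
    simp at this
    exact Polynomial.X_ne_zero this.symm
  have hcc : c.comp (Polynomial.X + 1) ≠ 0 := by
    intro h
    have : (c.comp (Polynomial.X + Polynomial.C 1)) = 0 := by simpa using h
    rw [Polynomial.comp_X_add_C_eq_zero_iff] at this
    exact hc this
  have e : sh (monomial a c) = C (c.comp (Polynomial.X + 1)) *
      ∏ k ∈ a.support, shX k ^ a k := by
    simp [sh, eval₂_monomial, Finsupp.prod]
  have hprod : ∏ k ∈ a.support, shX k ^ a k ≠ 0 :=
    Finset.prod_ne_zero_iff.2 fun k _ => pow_ne_zero _ (hne k)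
  rw [e]
  constructor
  · rw [MonomialOrder.degree_mul (by simpa using hcc) hprod, MonomialOrder.degree_C, zero_add,
      MonomialOrder.degree_prod (fun k _ => pow_ne_zero _ (hne k))]
    simp only [MonomialOrder.degree_pow, (degree_shX _).1]
    conv_rhs => rw [← Finsupp.sum_single a]
    simp [Finsupp.sum]
  · rw [MonomialOrder.leadingCoeff_mul, MonomialOrder.leadingCoeff_C,
      MonomialOrder.leadingCoeff_prod_of_mem_nonZeroDivisors]
    · simp only [MonomialOrder.leadingCoeff_pow, (degree_shX _).2, Finset.prod_pow_eq_pow_sum]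
      rfl
    · intro k _
      rw [MonomialOrder.leadingCoeff_pow, (degree_shX _).2]
      exact mem_nonZeroDivisors_of_ne_zero (pow_ne_zero _ Polynomial.X_ne_zero)

lemma sh_eq_sum (P : GS) : sh P = ∑ a ∈ P.support, sh (monomial a (P.coeff a)) := by
  conv_lhs => rw [P.as_sum, map_sum]

lemma degree_sh_le (P : GS) : mo.toSyn (mo.degree (sh P)) ≤ mo.toSyn (mo.degree P) := by
  rw [sh_eq_sum]
  refine MonomialOrder.degree_sum_le.trans (Finset.sup_le ?_)
  intro a ha
  rw [(degree_sh_monomial a _ (mem_support_iff.1 ha)).1]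
  exact mo.le_degree ha

lemma coeff_sh (P : GS) (hP : P ≠ 0) : (sh P).coeff (mo.degree P) =
    (mo.leadingCoeff P).comp (Polynomial.X + 1) * Polynomial.X ^ (mo.degree P).degree := by
  rw [sh_eq_sum, coeff_sum, Finset.sum_eq_single (mo.degree P)]
  · have h := degree_sh_monomial (mo.degree P) (P.coeff (mo.degree P))
      (mo.coeff_degree_ne_zero_iff.2 hP)
    have h2 := h.2
    rw [MonomialOrder.leadingCoeff, h.1] at h2
    exact h2
  · intro a ha hne
    apply mo.coeff_eq_zero_of_lt
    rw [(degree_sh_monomial a _ (mem_support_iff.1 ha)).1]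
    exact lt_of_le_of_ne (mo.le_degree ha) (fun h => hne (mo.toSyn.injective h))
  · intro h
    exact absurd (mo.degree_mem_support hP) h

/-- The sequence of derivatives of Gamma. -/
noncomputable def G (x : ℝ) (k : ℕ) : ℂ := ((iteratedDeriv k Real.Gamma x : ℝ) : ℂ)

lemma contDiffAt_Gamma {x : ℝ} (hx : 0 < x) (n : ℕ) : ContDiffAt ℝ n Real.Gamma x := by
  have h1 : AnalyticAt ℂ Complex.Gamma (x : ℂ) := by
    have ho : IsOpen {s : ℂ | 0 < s.re} := isOpen_lt continuous_const Complex.continuous_re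
    refine DifferentiableOn.analyticAt (s := {s : ℂ | 0 < s.re}) ?_ (ho.mem_nhds (by simpa using hx))
    intro s hs
    refine (Complex.differentiableAt_Gamma s ?_).differentiableWithinAt
    intro m h
    have := congrArg Complex.re h
    simp at this
    have h3 : 0 < s.re := hs
    have : (0 : ℝ) ≤ m := m.cast_nonneg
    linarith
  have h2 : ContDiffAt ℂ n Complex.Gamma (x : ℂ) := h1.contDiffAt
  have := h2.real_of_complex
  refine this.congr_of_eventuallyEq (Eventually.of_forall fun y => ?_)
  simp [Complex.Gamma_ofReal]

lemma iter_shift (k : ℕ) : ∀ x : ℝ, 0 < x → iteratedDeriv k Real.Gamma (x + 1) =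
    x * iteratedDeriv k Real.Gamma x + k * iteratedDeriv (k - 1) Real.Gamma x := by
  have hd : ∀ (k : ℕ) (x : ℝ), 0 < x → HasDerivAt (iteratedDeriv k Real.Gamma)
      (iteratedDeriv (k + 1) Real.Gamma x) x := by
    intro k x hx
    rw [iteratedDeriv_succ]
    have hc := contDiffAt_Gamma hx (k + 1)
    have hw := (contDiffWithinAt_univ.2 hc).differentiableWithinAt_iteratedDerivWithin (m := k)
      (by exact_mod_cast Nat.lt_succ_self k) (by simpa using uniqueDiffOn_univ)
    rw [iteratedDerivWithin_univ, differentiableWithinAt_univ] at hw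
    exact hw.hasDerivAt
  induction k with
  | zero => intro x hx; simp [Real.Gamma_add_one hx.ne']
  | succ k ih =>
    intro x hx
    have h1 : HasDerivAt (fun x => iteratedDeriv k Real.Gamma (x + 1))
        (iteratedDeriv (k + 1) Real.Gamma (x + 1)) x :=
      (hd k (x + 1) (by linarith)).comp_add_const x 1
    have h2 : HasDerivAt (fun x => x * iteratedDeriv k Real.Gamma x +
        k * iteratedDeriv (k - 1) Real.Gamma x)
        (x * iteratedDeriv (k + 1) Real.Gamma x +
          (k + 1) * iteratedDeriv k Real.Gamma x) x := by
      have h3 := (hasDerivAt_id x).mul (hd k x hx)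
      cases k with
      | zero => 
        have h4 := h3.add (hasDerivAt_const x (0 : ℝ))
        refine (h4.congr_of_eventuallyEq (Eventually.of_forall fun y => ?_)).congr_deriv ?_
        · simp
        · simp only [id]
          push_cast
          ring
      | succ k =>
        have h4 := (hd k x hx).const_mul ((k + 1 : ℕ) : ℝ)
        refine ((h3.add h4).congr_of_eventuallyEq
          (Eventually.of_forall fun y => ?_)).congr_deriv ?_
        · simp
        · simp only [id]
          push_cast
          ring
    have h5 : (fun x => iteratedDeriv k Real.Gamma (x + 1)) =ᶠ[nhds x]
        (fun x => x * iteratedDeriv k Real.Gamma x + k * iteratedDeriv (k - 1) Real.Gamma x) := by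
      filter_upwards [lt_mem_nhds hx] with y hy using ih y hy
    have := h1.unique (h2.congr_of_eventuallyEq h5)
    rw [this]
    simp

lemma G_shift {x : ℝ} (hx : 0 < x) : lin x (G x) = G (x + 1) := by
  funext k
  simp only [lin, G]
  rw [iter_shift k x hx]
  push_cast
  rfl

/-- Differential relations satisfied by Gamma near infinity. -/
def InI (P : GS) : Prop := ∀ᶠ x : ℝ in atTop, ev x (G x) P = 0

lemma InI_sh {P : GS} (h : InI P) : InI (sh P) := by
  have h1 := (tendsto_atTop_add_const_right atTop (1 : ℝ) tendsto_id).eventually h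
  filter_upwards [h1, eventually_gt_atTop 0] with x hx h0
  rw [ev_sh, G_shift h0]
  simpa using hx

lemma InI.sub_mul {P Q R : GS} (h : InI P) (hQ : InI Q) : InI (P - R * Q) := by
  filter_upwards [h, hQ] with x h1 h2
  simp [h1, h2]

lemma InI.of_C_mul {P : GS} {γ : ℂ} (h : InI (C (Polynomial.X - Polynomial.C γ) * P)) :
    InI P := by
  filter_upwards [h, eventually_gt_atTop γ.re] with x h1 h2
  rw [map_mul, mul_eq_zero] at h1
  refine h1.resolve_left ?_
  simp only [ev, coe_eval₂Hom, eval₂_C, Polynomial.coe_evalRingHom, Polynomial.eval_sub,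
    Polynomial.eval_X, Polynomial.eval_C]
  intro h3
  have := congrArg Complex.re h3
  simp at this
  linarith

lemma InI.of_X_mul {P : GS} (h : InI (X (toDual 0) * P)) : InI P := by
  filter_upwards [h, eventually_gt_atTop 0] with x h1 h2
  rw [map_mul, mul_eq_zero] at h1
  refine h1.resolve_left ?_
  simp [ev, G, (Real.Gamma_pos_of_pos h2).ne']

lemma eq_zero_of_InI_C {p : Polynomial ℂ} (h : InI (C p)) : p = 0 := by
  obtain ⟨a, ha⟩ := eventually_atTop.1 h
  apply Polynomial.eq_zero_of_infinite_isRoot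
  refine Set.Infinite.mono (s := (fun x : ℝ => (x : ℂ)) '' Set.Ici a) ?_ ?_
  · rintro _ ⟨x, hx, rfl⟩
    simpa [ev] using ha x hx
  · exact (Set.Ici_infinite a).image Complex.ofReal_injective.injOn

lemma ev_C_mul (x : ℂ) (y : ℕ → ℂ) (p : Polynomial ℂ) (P : GS) :
    ev x y (C p * P) = p.eval x * ev x y P := by simp [ev]

/-- main algebraic statement -/
theorem InI.eq_zero : ∀ P : GS, InI P → P = 0 := by
  by_contra! hex
  obtain ⟨P0, hP0⟩ := hex
  let f : GS → mo.syn ×ₗ ℕ :=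
    fun P => toLex (mo.toSyn (mo.degree P), (mo.leadingCoeff P).natDegree)
  obtain ⟨P, ⟨hP, hPne⟩, hmin⟩ := (InvImage.wf f wellFounded_lt).has_min
    {P | InI P ∧ P ≠ 0} ⟨P0, hP0⟩
  have hm1 : ∀ Q, InI Q → Q ≠ 0 → ¬ mo.toSyn (mo.degree Q) < mo.toSyn (mo.degree P) := by
    intro Q h1 h2 h3
    exact hmin Q ⟨h1, h2⟩ (Prod.Lex.toLex_lt_toLex.2 (Or.inl h3))
  have hm2 : ∀ Q, InI Q → Q ≠ 0 → mo.degree Q = mo.degree P →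
      ¬ (mo.leadingCoeff Q).natDegree < (mo.leadingCoeff P).natDegree := by
    intro Q h1 h2 h3 h4
    exact hmin Q ⟨h1, h2⟩ (Prod.Lex.toLex_lt_toLex.2 (Or.inr ⟨by simp only [h3], h4⟩))
  clear hmin
  set p := mo.leadingCoeff P with hp
  have hpne : p ≠ 0 := mo.leadingCoeff_ne_zero_iff.2 hPne
  set q := p.comp (Polynomial.X + 1) * Polynomial.X ^ (mo.degree P).degree with hq
  have hcoef : (sh P).coeff (mo.degree P) = q := coeff_sh P hPne
  set R := q / p with hR
  have hQ : sh P - C R * P = 0 := by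
    by_contra hne
    have hI : InI (sh P - C R * P) := (InI_sh hP).sub_mul hP
    have hle : mo.toSyn (mo.degree (sh P - C R * P)) ≤ mo.toSyn (mo.degree P) := by
      refine mo.degree_sub_le.trans (sup_le (degree_sh_le P) ?_)
      rw [C_mul']
      exact mo.degree_smul_le
    have heq : mo.degree (sh P - C R * P) = mo.degree P :=
      mo.toSyn.injective (le_antisymm hle (not_lt.1 (hm1 _ hI hne)))
    have hlc : mo.leadingCoeff (sh P - C R * P) = q % p := by
      rw [MonomialOrder.leadingCoeff, heq, coeff_sub, coeff_C_mul, hcoef,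
        EuclideanDomain.mod_eq_sub_mul_div]
      change q - R * p = _
      rw [hR, mul_comm]
    refine hm2 _ hI hne heq ?_
    have hl0 := mo.leadingCoeff_ne_zero_iff.2 hne
    rw [hlc] at hl0 ⊢
    exact Polynomial.natDegree_lt_natDegree hl0 (EuclideanDomain.mod_lt q hpne)
  rw [sub_eq_zero] at hQ
  have hRp : q = R * p := by
    rw [← hcoef, hQ, coeff_C_mul]; rfl
  have hd0 : mo.degree P ≠ 0 := by
    intro h
    have hC := mo.eq_C_of_degree_eq_zero h
    rw [hC] at hP
    exact hpne (eq_zero_of_InI_C hP)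
  have hdd : (mo.degree P).degree ≠ 0 := by
    rwa [Ne, Finsupp.degree_eq_zero_iff]
  have hcomp : (p.comp (Polynomial.X + 1)).natDegree = p.natDegree := by
    rw [Polynomial.natDegree_comp, ← Polynomial.C_1, Polynomial.natDegree_X_add_C, mul_one]
  have hcomp0 : p.comp (Polynomial.X + 1) ≠ 0 := by
    rw [← Polynomial.C_1, Ne, Polynomial.comp_X_add_C_eq_zero_iff]
    exact hpne
  have hq0 : q ≠ 0 := mul_ne_zero hcomp0 (pow_ne_zero _ Polynomial.X_ne_zero)
  have hR0 : R ≠ 0 := by rintro h; rw [h, zero_mul] at hRp; exact hq0 hRp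
  have hRdeg : R.natDegree = (mo.degree P).degree := by
    have h1 := congrArg Polynomial.natDegree hRp
    rw [Polynomial.natDegree_mul hR0 hpne, hq,
      Polynomial.natDegree_mul hcomp0 (pow_ne_zero _ Polynomial.X_ne_zero), hcomp,
      Polynomial.natDegree_X_pow] at h1
    omega
  obtain ⟨γ, hγ⟩ : ∃ γ, R.IsRoot γ := by
    apply Complex.exists_root
    rw [← Polynomial.natDegree_pos_iff_degree_pos]
    omega
  have key : ∀ x y, ev (x + 1) (lin x y) P = R.eval x * ev x y P := by
    intro x y
    rw [← ev_sh, hQ, ev_C_mul]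
  by_cases hγ0 : γ = 0
  · subst hγ0
    have hnat : ∀ (m : ℕ) (z : ℕ → ℂ), z 0 = 0 → ev ((m : ℂ) + 1) z P = 0 := by
      intro m
      induction m with
      | zero =>
        intro z hz
        obtain ⟨y, rfl⟩ := lin_surj_zero z hz
        have := key 0 y
        rw [hγ.eq_zero, zero_mul] at this
        simpa using this
      | succ m ih =>
        intro z hz
        have hne : ((m : ℂ) + 1) ≠ 0 := by exact_mod_cast m.succ_ne_zero
        obtain ⟨y, rfl⟩ := lin_surj hne z
        rw [lin_zero, mul_eq_zero] at hz
        push_cast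
        rw [key, ih y (hz.resolve_left hne), mul_zero]
    have hall : ∀ x y, y 0 = 0 → ev x y P = 0 := by
      intro x y hy
      let u : Polynomial ℂ := eval₂Hom (RingHom.id (Polynomial ℂ))
        (fun k : ℕᵒᵈ => Polynomial.C (y (ofDual k))) P
      have hu : ∀ x, u.eval x = ev x y P := by
        intro x
        have : (Polynomial.evalRingHom x).comp (eval₂Hom (RingHom.id (Polynomial ℂ))
            (fun k : ℕᵒᵈ => Polynomial.C (y (ofDual k)))) = ev x y := by
          apply MvPolynomial.ringHom_ext
          · intro r
            simp [ev]
          · intro i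
            simp [ev]
        rw [← this]; rfl
      have hu0 : u = 0 := by
        apply Polynomial.eq_zero_of_infinite_isRoot
        refine Set.Infinite.mono (s := Set.range (fun m : ℕ => (m : ℂ) + 1)) ?_ ?_
        · rintro _ ⟨m, rfl⟩
          change u.eval _ = 0
          rw [hu, hnat m y hy]
        · apply Set.infinite_range_of_injective
          intro a b hab
          simpa using hab
      rw [← hu, hu0, Polynomial.eval_zero]
    obtain ⟨P', rfl⟩ := X_dvd_of_ev hall
    have hne' : P' ≠ 0 := right_ne_zero_of_mul hPne
    refine hm1 P' hP.of_X_mul hne' ?_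
    rw [MonomialOrder.degree_mul (X_ne_zero _) hne', MonomialOrder.degree_X, map_add]
    refine lt_add_of_pos_left _ ?_
    rw [MonomialOrder.toSyn_lt_iff_ne_zero]
    simp
  · have hz : ∀ z, ev (γ + 1) z P = 0 := by
      intro z
      obtain ⟨y, rfl⟩ := lin_surj hγ0 z
      rw [key, hγ.eq_zero, zero_mul]
    obtain ⟨P', rfl⟩ := dvd_of_ev hz
    have hne' : P' ≠ 0 := right_ne_zero_of_mul hPne
    refine hm2 P' hP.of_C_mul hne' ?_ ?_
    · rw [MonomialOrder.degree_mul (left_ne_zero_of_mul hPne) hne', MonomialOrder.degree_C,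
        zero_add]
    · rw [hp, MonomialOrder.leadingCoeff_mul, MonomialOrder.leadingCoeff_C,
        Polynomial.natDegree_mul (Polynomial.X_sub_C_ne_zero _)
          (mo.leadingCoeff_ne_zero_iff.2 hne'), Polynomial.natDegree_X_sub_C]
      omega

/-- Renaming of variables. -/
def ren (n : ℕ) (i : Fin (n + 2)) : Option ℕᵒᵈ :=
  if i.val = 0 then none else some (toDual (i.val - 1))

lemma ren_inj (n : ℕ) : Function.Injective (ren n) := by
  intro i j h
  unfold ren at h
  split_ifs at h with h1 h2 h2
  · exact Fin.ext (by omega)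
  · have h3 := toDual.injective (Option.some.inj h)
    exact Fin.ext (by omega)

/-- Conversion of polynomials. -/
noncomputable def conv (n : ℕ) : MvPolynomial (Fin (n + 2)) ℝ →+* GS :=
  ((optionEquivRight ℂ ℕᵒᵈ : _ →+* GS).comp
    (rename (R := ℂ) (ren n) : _ →+* MvPolynomial (Option ℕᵒᵈ) ℂ)).comp
    (MvPolynomial.map Complex.ofRealHom)

lemma conv_inj (n : ℕ) : Function.Injective (conv n) := by
  intro a b h
  have h1 : optionEquivRight ℂ ℕᵒᵈ (rename (ren n) (MvPolynomial.map Complex.ofRealHom a)) =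
    optionEquivRight ℂ ℕᵒᵈ (rename (ren n) (MvPolynomial.map Complex.ofRealHom b)) := h
  exact map_injective _ Complex.ofRealHom.injective
    (rename_injective _ (ren_inj n) ((optionEquivRight ℂ ℕᵒᵈ).injective h1))

lemma ev_conv (n : ℕ) (x : ℝ) (P : MvPolynomial (Fin (n + 2)) ℝ) :
    ev x (G x) (conv n P) = ((MvPolynomial.eval
          (fun i : Fin (n + 2) =>
            if i.val = 0 then x else iteratedDeriv (i.val - 1) Real.Gamma x) P : ℝ) : ℂ) := by
  have : (ev x (G x)).comp (conv n) = Complex.ofRealHom.comp (MvPolynomial.eval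
          (fun i : Fin (n + 2) =>
            if i.val = 0 then x else iteratedDeriv (i.val - 1) Real.Gamma x)) := by
    apply MvPolynomial.ringHom_ext
    · intro r
      simp [ev, conv, optionEquivRight_C]
    · intro i
      by_cases hi : i = 0
      · simp [ev, conv, ren, hi]
      · simp [ev, conv, ren, hi, G]
  exact congrFun (congrArg DFunLike.coe this) P

end HolderGamma

/-- The real Gamma function is not differentially algebraic over `ℝ(x)`: there are no
`n ∈ ℕ` and nonzero polynomial `P ∈ ℝ[X₀, …, X_{n+1}]` with
`P (x, Γ x, Γ' x, …, Γ⁽ⁿ⁾ x) = 0` for all real `x > 0`. -/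
theorem realGamma_not_diffAlgebraic :
    ¬ ∃ (n : ℕ) (P : MvPolynomial (Fin (n + 2)) ℝ),
      P ≠ 0 ∧ ∀ x : ℝ, 0 < x →
        MvPolynomial.eval
          (fun i : Fin (n + 2) =>
            if i.val = 0 then x else iteratedDeriv (i.val - 1) Real.Gamma x) P = 0 := by
  rintro ⟨n, P, hP, h⟩
  apply hP
  apply HolderGamma.conv_inj n
  rw [map_zero]
  apply HolderGamma.InI.eq_zero
  filter_upwards [Filter.eventually_gt_atTop 0] with x hx
  rw [HolderGamma.ev_conv, h x hx, Complex.ofReal_zero]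
end

section
/- The Riemann zeta function ζ is differentially transcendental: there do not exist n ∈ ℕ and a nonzero polynomial P ∈ ℂ[X₀, X₁, …, X_{n+1}] such that P(s, ζ(s), ζ′(s), …, ζ⁽ⁿ⁾(s)) = 0 for every s ∈ ℂ at which ζ is analytic (i.e., every s ≠ 1). -/
namespace ZetaDT
open ArithmeticFunction MvPolynomial Filter Topology

/-- the arithmetic function `m ↦ (-log m)^k` -/
noncomputable def F (k : ℕ) : ArithmeticFunction ℂ :=
  ⟨fun m => if m = 0 then 0 else (-Complex.log m) ^ k, by simp⟩

lemma F_apply (k m : ℕ) (hm : m ≠ 0) : F k m = (-Complex.log m) ^ k := by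
  simp [F, hm]

/-- evaluation at `1` -/
noncomputable def ev1 : ArithmeticFunction ℂ →+* ℂ where
  toFun f := f 1
  map_one' := by simp
  map_mul' f g := by simp
  map_zero' := by simp
  map_add' f g := by simp

/-- underlying linear map of `∂_p` -/
noncomputable def pdLin (p : ℕ) : ArithmeticFunction ℂ →ₗ[ℂ] ArithmeticFunction ℂ where
  toFun f := ⟨fun m => (padicValNat p (p * m) : ℂ) * f (p * m), by simp⟩
  map_add' f g := by
    ext m
    exact mul_add _ _ _
  map_smul' c f := by
    ext m
    exact mul_left_comm _ _ _

lemma pdLin_apply (p : ℕ) (f : ArithmeticFunction ℂ) (m : ℕ) :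
    pdLin p f m = (padicValNat p (p * m) : ℂ) * f (p * m) := rfl

lemma pd_aux (p : ℕ) (hp : p.Prime) (f g : ArithmeticFunction ℂ) (m : ℕ) :
    ∑ x ∈ (p * m).divisorsAntidiagonal, (padicValNat p x.1 : ℂ) * f x.1 * g x.2
      = (pdLin p f * g) m := by
  rw [ArithmeticFunction.mul_apply]
  symm
  apply Finset.sum_of_injOn (fun x : ℕ × ℕ => (p * x.1, x.2))
  · rintro ⟨a, b⟩ _ ⟨c, d⟩ _ h
    simpa [hp.ne_zero] using h
  · rintro ⟨a, b⟩ h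
    simp only [Finset.mem_coe, Nat.mem_divisorsAntidiagonal] at h ⊢
    refine ⟨by rw [← h.1]; ring, mul_ne_zero hp.ne_zero h.2⟩
  · rintro ⟨a, b⟩ h h'
    simp only [Nat.mem_divisorsAntidiagonal] at h
    have : ¬ p ∣ a := by
      rintro ⟨c, rfl⟩
      apply h'
      refine ⟨(c, b), ?_, rfl⟩
      simp only [Finset.mem_coe, Nat.mem_divisorsAntidiagonal]
      refine ⟨?_, right_ne_zero_of_mul h.2⟩
      exact Nat.eq_of_mul_eq_mul_left hp.pos (by rw [← h.1]; ring)
    simp [padicValNat.eq_zero_of_not_dvd this]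
  · rintro ⟨a, b⟩ h
    rfl

lemma pd_leibniz (p : ℕ) (hp : p.Prime) (f g : ArithmeticFunction ℂ) :
    pdLin p (f * g) = f • pdLin p g + g • pdLin p f := by
  have := Fact.mk hp
  ext m
  have hswap : ∑ x ∈ (p * m).divisorsAntidiagonal, (padicValNat p x.1 : ℂ) * g x.1 * f x.2
      = ∑ x ∈ (p * m).divisorsAntidiagonal, (padicValNat p x.2 : ℂ) * g x.2 * f x.1 := by
    conv_lhs => rw [← Nat.map_swap_divisorsAntidiagonal, Finset.sum_map]
    rfl
  rw [smul_eq_mul, smul_eq_mul, mul_comm f (pdLin p g), mul_comm g (pdLin p f), ArithmeticFunction.add_apply,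
    ← pd_aux p hp, ← pd_aux p hp,
    hswap,
    ← Finset.sum_add_distrib, pdLin_apply, ArithmeticFunction.mul_apply, Finset.mul_sum]
  apply Finset.sum_congr rfl
  rintro ⟨a, b⟩ h
  simp only [Nat.mem_divisorsAntidiagonal] at h
  have ha : a ≠ 0 := by rintro rfl; simp at h; tauto
  have hb : b ≠ 0 := by rintro rfl; simp at h; tauto
  rw [← h.1, padicValNat.mul ha hb]
  push_cast
  ring

noncomputable def pd (p : ℕ) (hp : p.Prime) :
    Derivation ℂ (ArithmeticFunction ℂ) (ArithmeticFunction ℂ) :=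
  Derivation.mk' (pdLin p) (pd_leibniz p hp)

lemma chain {n : ℕ} (D : Derivation ℂ (ArithmeticFunction ℂ) (ArithmeticFunction ℂ))
    (f : Fin n → ArithmeticFunction ℂ) (Q : MvPolynomial (Fin n) ℂ) :
    D (aeval f Q) = ∑ i, D (f i) * aeval f (pderiv i Q) := by
  induction Q using MvPolynomial.induction_on with
  | C a => simp
  | add P Q hP hQ => simp [hP, hQ, mul_add, Finset.sum_add_distrib]
  | mul_X P j hP =>
    classical
    simp only [map_mul, aeval_X, Derivation.leibniz, hP, smul_eq_mul, pderiv_X, map_add, mul_add,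
      Finset.sum_add_distrib, Finset.mul_sum]
    congr 1
    · rw [Finset.sum_eq_single j]
      · simp [mul_comm]
      · intro b _ hb
        simp [Pi.single_apply, hb.symm]
      · simp
    · apply Finset.sum_congr rfl
      intro i _
      ring

lemma eq_C {n : ℕ} (Q : MvPolynomial (Fin n) ℂ) (h : ∀ i, pderiv i Q = 0) :
    Q = C (coeff 0 Q) := by
  ext m
  rw [coeff_C]
  split_ifs with hm
  · rw [hm]
  · obtain ⟨i, hi⟩ : ∃ i, m i ≠ 0 := by
      by_contra hc
      push Not at hc
      exact hm (by ext i; simp [hc i])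
    have h1 := coeff_pderiv (i := i) Q (m - Finsupp.single i 1)
    rw [h i, coeff_zero, tsub_add_cancel_of_le (by simpa [Nat.one_le_iff_ne_zero] using hi)] at h1
    have h2 := h1.symm
    rw [mul_eq_zero] at h2
    exact h2.resolve_right (Nat.cast_add_one_ne_zero _)

lemma deg_pderiv {n d : ℕ} (Q : MvPolynomial (Fin n) ℂ) (h : Q.totalDegree ≤ d + 1) (i : Fin n) :
    (pderiv i Q).totalDegree ≤ d := by
  apply Finset.sup_le
  intro m hm
  rw [mem_support_iff, coeff_pderiv] at hm
  have h1 := le_totalDegree (mem_support_iff.mpr (left_ne_zero_of_mul hm))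
  rw [Finsupp.sum_add_index' (by simp) (by simp)] at h1
  simp at h1
  omega

lemma alg_indep_aux {n : ℕ} (Q : MvPolynomial (Fin n) ℂ)
    (h : aeval (fun i : Fin n => F i) Q = 0) (i : Fin n) :
    aeval (fun i : Fin n => F i) (pderiv i Q) = 0 := by
  let p : Fin n → ℕ := fun j => Nat.nth Nat.Prime j
  have hp : ∀ j, (p j).Prime := fun j => Nat.prime_nth_prime _
  let M : Matrix (Fin n) (Fin n) (ArithmeticFunction ℂ) :=
    Matrix.of fun i j => pd (p i) (hp i) (F j)
  have hM : M.mulVec (fun i => aeval (fun i : Fin n => F i) (pderiv i Q)) = 0 := by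
    ext1 j
    have := chain (pd (p j) (hp j)) (fun i : Fin n => F i) Q
    rw [h, _root_.map_zero] at this
    simpa [M, Matrix.mulVec, dotProduct] using this.symm
  have hdet : IsUnit M.det := by
    rw [ArithmeticFunction.isUnit_iff_isUnit_apply_one]
    change IsUnit (ev1 M.det)
    rw [RingHom.map_det, isUnit_iff_ne_zero]
    have : ev1.mapMatrix M = Matrix.vandermonde (fun i => -Complex.log (p i)) := by
      ext i j
      have := Fact.mk (hp i)
      change pdLin (p i) (F j) 1 = _
      rw [pdLin_apply, mul_one, padicValNat.self (hp i).one_lt, F_apply _ _ (hp i).ne_zero]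
      simp [Matrix.vandermonde_apply]
    rw [this, Matrix.det_vandermonde_ne_zero_iff]
    intro a b hab
    simp only [neg_inj] at hab
    rw [← Complex.natCast_log, ← Complex.natCast_log, Complex.ofReal_inj] at hab
    have h2 := Real.log_injOn_pos (by simpa using (hp a).pos) (by simpa using (hp b).pos) hab
    have h3 : p a = p b := by exact_mod_cast h2
    exact Fin.ext (Nat.nth_injective Nat.infinite_setOfPred_prime h3)
  have := Matrix.mulVec_injective_of_isUnit ((Matrix.isUnit_iff_isUnit_det _).mpr hdet)
    (hM.trans (Matrix.mulVec_zero M).symm)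
  exact congrFun this i

lemma alg_indep {n : ℕ} (d : ℕ) : ∀ (Q : MvPolynomial (Fin n) ℂ), Q.totalDegree ≤ d →
    aeval (fun i : Fin n => F i) Q = 0 → Q = 0 := by
  have key : ∀ (Q : MvPolynomial (Fin n) ℂ) (c : ℂ),
    aeval (fun i : Fin n => F i) Q = 0 → Q = C c → Q = 0 := by
    rintro Q c h rfl
    rw [aeval_C] at h
    have := congrArg ev1 h
    have h2 : c = 0 := by
      have h3 : (algebraMap ℂ (ArithmeticFunction ℂ) c) 1 = 0 := this
      simpa [ArithmeticFunction.algebraMap_apply_one] using h3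
    simp [h2]
  induction d with
  | zero =>
    intro Q hQ h
    exact key Q _ h (totalDegree_eq_zero_iff_eq_C.mp (Nat.le_zero.mp hQ))
  | succ d ih =>
    intro Q hQ h
    exact key Q _ h (eq_C Q fun i => ih _ (deg_pderiv Q hQ i) (alg_indep_aux Q h i))

lemma F_eq (k : ℕ) {m : ℕ} (hm : m ≠ 0) : F k m = (-1 : ℂ) ^ k * (LSeries.logMul^[k] 1) m := by
  rw [F_apply k m hm]
  induction k with
  | zero => simp
  | succ k ih =>
    rw [Function.iterate_succ_apply', LSeries.logMul, pow_succ, ih]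
    ring

lemma L_F (k : ℕ) (s : ℂ) (hs : 1 < s.re) : LSeriesSummable (F k) s ∧
    LSeries (F k) s = iteratedDeriv k riemannZeta s := by
  have h1 : LSeries.abscissaOfAbsConv 1 < s.re := by
    rw [LSeries.abscissaOfAbsConv_one]; exact_mod_cast hs
  have h2 : LSeries.abscissaOfAbsConv (LSeries.logMul^[k] 1) < s.re := by
    rwa [LSeries.absicssaOfAbsConv_logPowMul]
  have h3 : LSeriesSummable ((-1 : ℂ) ^ k • (LSeries.logMul^[k] 1)) s :=
    (LSeriesSummable_of_abscissaOfAbsConv_lt_re h2).smul _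
  constructor
  · rw [LSeriesSummable_congr (g := (-1 : ℂ) ^ k • (LSeries.logMul^[k] 1)) s
      (fun {m} hm => F_eq k hm)]
    exact h3
  · rw [LSeries_congr (g := (-1 : ℂ) ^ k • (LSeries.logMul^[k] 1)) (fun {m} hm => F_eq k hm) s,
      LSeries_smul, ← LSeries_iteratedDeriv k h1]
    apply Filter.EventuallyEq.iteratedDeriv_eq
    filter_upwards [(isOpen_lt continuous_const Complex.continuous_re).mem_nhds hs] with z hz
    exact LSeries_one_eq_riemannZeta hz

lemma L_aeval {n : ℕ} (Q : MvPolynomial (Fin n) ℂ) (s : ℂ) (hs : 1 < s.re) :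
    LSeriesSummable (aeval (fun i : Fin n => F i) Q) s ∧
    LSeries (aeval (fun i : Fin n => F i) Q) s
      = eval (fun i : Fin n => iteratedDeriv i riemannZeta s) Q := by
  induction Q using MvPolynomial.induction_on with
  | C a =>
    have h : ((algebraMap ℂ (ArithmeticFunction ℂ) a : ArithmeticFunction ℂ) : ℕ → ℂ)
        = a • LSeries.delta := by
      ext m
      simp [Algebra.algebraMap_eq_smul_one, LSeries.delta, ArithmeticFunction.one_apply]
    rw [aeval_C, h]
    have hd : LSeriesSummable LSeries.delta s := by
      have : LSeriesSummable ((1 : ArithmeticFunction ℂ)) s := by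
        apply summable_of_ne_finset_zero (s := {1})
        intro b hb
        simp at hb
        simp [LSeries.term, ArithmeticFunction.one_apply, hb]
      convert this using 1
      ext m
      simp [LSeries.delta, ArithmeticFunction.one_apply]
    refine ⟨hd.smul _, ?_⟩
    rw [LSeries_smul, LSeries_delta]
    simp
  | add P Q hP hQ =>
    rw [map_add, map_add]
    refine ⟨hP.1.add hQ.1, ?_⟩
    rw [← hP.2, ← hQ.2, ← LSeries_add hP.1 hQ.1]
    rfl
  | mul_X P j hP =>
    have hj := L_F j s hs
    rw [map_mul, map_mul, aeval_X, eval_X]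
    refine ⟨ArithmeticFunction.LSeriesSummable_mul hP.1 hj.1, ?_⟩
    rw [← hP.2, ← hj.2, ← ArithmeticFunction.LSeries_mul' hP.1 hj.1]

/-- Dirichlet series are linearly independent over polynomials in `s`. -/
lemma elim_s (N : ℕ) (d : ℕ → ArithmeticFunction ℂ)
    (hd : ∀ j, LSeries.abscissaOfAbsConv (d j) < ⊤)
    (h : ∀ x : ℝ, 1 < x → ∑ j ∈ Finset.range N, LSeries (d j) x * (x : ℂ) ^ j = 0) (m : ℕ) :
    ∀ j < N, d j m = 0 := by
  induction m using Nat.strong_induction_on with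
  | _ m ih =>
  rcases m with _ | m
  · simp
  by_contra! hc
  have hex : ((Finset.range N).filter (fun j => d j (m + 1) ≠ 0)).Nonempty := by
    obtain ⟨j, hj, hj'⟩ := hc
    exact ⟨j, by simp [hj, hj']⟩
  obtain ⟨J, hJ, hJmax⟩ := Finset.exists_max_image _ (fun j => j) hex
  simp only [Finset.mem_filter, Finset.mem_range] at hJ hJmax
  have hz : ∀ j < N, ∀ k ≤ m, d j k = 0 := fun j hj k hk => ih k (by omega) j hj
  have hlim : ∀ j ∈ Finset.range N, Tendsto (fun x : ℝ =>
      ((m + 1 : ℕ) : ℂ) ^ (x : ℂ) * LSeries (d j) x * ((x : ℂ) ^ j / (x : ℂ) ^ J)) atTop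
      (𝓝 (if j = J then d J (m + 1) else 0)) := by
    intro j hj
    rw [Finset.mem_range] at hj
    have h0 := LSeries.tendsto_cpow_mul_atTop (hz j hj) (hd j)
    rcases lt_trichotomy j J with hjJ | rfl | hjJ
    · rw [if_neg hjJ.ne]
      have h1 : Tendsto (fun x : ℝ => ((x : ℂ) ^ j / (x : ℂ) ^ J)) atTop (𝓝 0) := by
        have h2 : Tendsto (fun x : ℝ => ((x ^ (J - j))⁻¹ : ℝ)) atTop (𝓝 0) :=
          (tendsto_pow_atTop (by omega)).inv_tendsto_atTop
        have h3 := (Complex.continuous_ofReal.tendsto 0).comp h2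
        rw [Complex.ofReal_zero] at h3
        refine h3.congr' ?_
        filter_upwards [eventually_gt_atTop 0] with x hx
        have hx' : (x : ℂ) ≠ 0 := by exact_mod_cast hx.ne'
        simp only [Function.comp]
        push_cast
        rw [eq_div_iff (pow_ne_zero _ hx'), inv_mul_eq_iff_eq_mul₀ (pow_ne_zero _ hx'), ← pow_add]
        congr 1
        omega
      have h4 := h0.mul h1
      rw [mul_zero] at h4
      simpa using h4
    · rw [if_pos rfl]
      refine h0.congr' ?_
      filter_upwards [eventually_gt_atTop 0] with x hx
      have hx' : (x : ℂ) ≠ 0 := by exact_mod_cast hx.ne'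
      rw [div_self (pow_ne_zero _ hx')]
      simp
    · rw [if_neg hjJ.ne']
      have hz' : ∀ k ≤ m + 1, d j k = 0 := by
        intro k hk
        rcases Nat.lt_or_ge k (m + 1) with hk' | hk'
        · exact hz j hj k (by omega)
        · obtain rfl : k = m + 1 := by omega
          by_contra hne
          exact absurd (hJmax j ⟨hj, hne⟩) (by omega)
      have h0' := LSeries.tendsto_cpow_mul_atTop hz' (hd j)
      have h1 : Tendsto (fun x : ℝ => ((m + 1 : ℕ) : ℂ) ^ (x : ℂ) / ((m + 1 + 1 : ℕ) : ℂ) ^ (x : ℂ)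
          * (x : ℂ) ^ (j - J)) atTop (𝓝 0) := by
        have hpos : (0 : ℝ) < ((m + 1 + 1 : ℕ) : ℝ) := by positivity
        have hpos' : (0 : ℝ) < ((m + 1 : ℕ) : ℝ) := by positivity
        set b : ℝ := Real.log ((m + 1 + 1 : ℕ) : ℝ) - Real.log ((m + 1 : ℕ) : ℝ) with hb
        have hbpos : 0 < b := by
          rw [hb, sub_pos]
          apply Real.log_lt_log hpos'
          exact_mod_cast Nat.lt_succ_self _
        have h2 := tendsto_rpow_mul_exp_neg_mul_atTop_nhds_zero ((j - J : ℕ) : ℝ) b hbpos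
        have h3 := (Complex.continuous_ofReal.tendsto 0).comp h2
        rw [Complex.ofReal_zero] at h3
        refine h3.congr' ?_
        filter_upwards [eventually_gt_atTop 0] with x hx
        simp only [Function.comp]
        rw [Real.rpow_natCast, ← Complex.ofReal_natCast, ← Complex.ofReal_natCast,
          ← Complex.ofReal_cpow hpos'.le, ← Complex.ofReal_cpow hpos.le,
          Real.rpow_def_of_pos hpos, Real.rpow_def_of_pos hpos', ← Complex.ofReal_div,
          ← Real.exp_sub, ← Complex.ofReal_pow, ← Complex.ofReal_mul, mul_comm]
        congr 3
        rw [hb]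
        ring
      have h4 := h0'.mul h1
      rw [mul_zero] at h4
      refine h4.congr' ?_
      filter_upwards [eventually_gt_atTop 0] with x hx
      have hx' : (x : ℂ) ≠ 0 := by exact_mod_cast hx.ne'
      have hne : ((m + 1 + 1 : ℕ) : ℂ) ^ (x : ℂ) ≠ 0 := by
        rw [Complex.cpow_ne_zero_iff]
        left
        exact Nat.cast_ne_zero.mpr (Nat.succ_ne_zero _)
      rw [pow_sub₀ _ hx' hjJ.le]
      rw [Nat.cast_succ (m + 1)] at hne ⊢
      field_simp
  have hsum := tendsto_finsetSum (Finset.range N) hlim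
  rw [Finset.sum_ite_eq' , if_pos (Finset.mem_range.mpr hJ.1)] at hsum
  refine hJ.2 (tendsto_nhds_unique hsum ?_)
  refine tendsto_const_nhds.congr' ?_
  filter_upwards [eventually_gt_atTop 1] with x hx
  have := h x hx
  calc (0 : ℂ) = ((m + 1 : ℕ) : ℂ) ^ (x : ℂ) / (x : ℂ) ^ J *
        ∑ j ∈ Finset.range N, LSeries (d j) x * (x : ℂ) ^ j := by rw [this, mul_zero]
    _ = _ := by
      rw [Finset.mul_sum]
      apply Finset.sum_congr rfl
      intro j _
      ring

end ZetaDT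

/-- The Riemann zeta function is differentially transcendental: there are no `n ∈ ℕ` and
nonzero polynomial `P ∈ ℂ[X₀, …, X_{n+1}]` with `P (s, ζ s, ζ' s, …, ζ⁽ⁿ⁾ s) = 0` at every
`s ≠ 1` (i.e. at every point where `ζ` is analytic). -/
theorem riemannZeta_diffTranscendental :
    ¬ ∃ (n : ℕ) (P : MvPolynomial (Fin (n + 2)) ℂ),
      P ≠ 0 ∧ ∀ s : ℂ, s ≠ 1 →
        MvPolynomial.eval
          (fun i : Fin (n + 2) =>
            if i.val = 0 then s else iteratedDeriv (i.val - 1) riemannZeta s) P = 0 := by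
  rintro ⟨n, P, hP, h⟩
  apply hP
  rw [← (MvPolynomial.finSuccEquiv ℂ (n + 1)).map_eq_zero_iff]
  set R := MvPolynomial.finSuccEquiv ℂ (n + 1) P with hR
  let d : ℕ → ArithmeticFunction ℂ := fun j =>
    MvPolynomial.aeval (fun i : Fin (n + 1) => ZetaDT.F i) (R.coeff j)
  have hd : ∀ j, LSeries.abscissaOfAbsConv (d j) < ⊤ := by
    intro j
    have := (ZetaDT.L_aeval (R.coeff j) 2 (by simp)).1
    exact this.abscissaOfAbsConv_le.trans_lt (EReal.coe_lt_top _)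
  have hsum : ∀ x : ℝ, 1 < x →
      ∑ j ∈ Finset.range (R.natDegree + 1), LSeries (d j) x * (x : ℂ) ^ j = 0 := by
    intro x hx
    have h1 := h x (by exact_mod_cast hx.ne')
    have h2 : (fun i : Fin (n + 2) =>
            if i.val = 0 then (x : ℂ) else iteratedDeriv (i.val - 1) riemannZeta (x : ℂ))
        = Fin.cons (x : ℂ) (fun i : Fin (n + 1) => iteratedDeriv i riemannZeta (x : ℂ)) := by
      ext i
      refine Fin.cases ?_ (fun i => ?_) i
      · simp
      · simp
    rw [h2, MvPolynomial.eval_eq_eval_mv_eval', ← hR, Polynomial.eval_map,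
      Polynomial.eval₂_eq_sum_range] at h1
    rw [← h1]
    apply Finset.sum_congr rfl
    intro j _
    rw [(ZetaDT.L_aeval (R.coeff j) x (by simpa using hx)).2]
  have hzero := ZetaDT.elim_s (R.natDegree + 1) d hd hsum
  ext1 j
  rw [Polynomial.coeff_zero]
  rcases Nat.lt_or_ge R.natDegree j with hj | hj
  · exact Polynomial.coeff_eq_zero_of_natDegree_lt hj
  · refine ZetaDT.alg_indep _ _ le_rfl ?_
    change d j = 0
    ext m
    simpa using hzero m j (by omega)
end

section
/- The Dirichlet eta function η, i.e., the entire function given by η(s) = (1 − 2^{1−s})·ζ(s) for s ≠ 1 (and agreeing with ∑_{n=1}^∞ (−1)^{n+1} n^{−s} for Re(s) > 1), is differentially transcendental: there do not exist n ∈ ℕ and a nonzero polynomial P ∈ ℂ[X₀, X₁, …, X_{n+1}] such that P(s, η(s), η′(s), …, η⁽ⁿ⁾(s)) = 0 for all s ∈ ℂ. -/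
namespace EtaAux
open ArithmeticFunction ArithmeticFunction.zeta Filter Topology

/-- Pointwise multiplication by the `p`-adic valuation. -/
noncomputable def D (p : ℕ) (g : ArithmeticFunction ℂ) : ArithmeticFunction ℂ :=
  ⟨fun n => (padicValNat p n : ℂ) * g n, by simp⟩

lemma D_apply (p : ℕ) (g : ArithmeticFunction ℂ) (n : ℕ) :
    D p g n = (padicValNat p n : ℂ) * g n := rfl

lemma D_add (p : ℕ) (g h : ArithmeticFunction ℂ) : D p (g + h) = D p g + D p h := by
  ext n; simp [D_apply, mul_add]

lemma D_mul (p : ℕ) [Fact p.Prime] (g h : ArithmeticFunction ℂ) :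
    D p (g * h) = D p g * h + g * D p h := by
  ext n
  simp only [D_apply, ArithmeticFunction.add_apply, ArithmeticFunction.mul_apply, Finset.mul_sum]
  rw [← Finset.sum_add_distrib]
  refine Finset.sum_congr rfl fun x hx => ?_
  obtain ⟨h1, h2⟩ := Nat.mem_divisorsAntidiagonal.1 hx
  have hx1 : x.1 ≠ 0 := by rintro h; simp [h] at h1; exact h2 h1.symm
  have hx2 : x.2 ≠ 0 := by rintro h; simp [h] at h1; exact h2 h1.symm
  rw [← h1, padicValNat.mul hx1 hx2]
  push_cast
  ring

lemma D_algebraMap (p : ℕ) (c : ℂ) : D p (algebraMap ℂ (ArithmeticFunction ℂ) c) = 0 := by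
  ext n
  rw [D_apply, Algebra.algebraMap_eq_smul_one]
  by_cases h : n = 1 <;> simp [h]

lemma D_aeval (p : ℕ) [Fact p.Prime] {m : ℕ} (F : Fin m → ArithmeticFunction ℂ)
    (Q : MvPolynomial (Fin m) ℂ) :
    D p (MvPolynomial.aeval F Q) =
      ∑ j, MvPolynomial.aeval F (MvPolynomial.pderiv j Q) * D p (F j) := by
  induction Q using MvPolynomial.induction_on with
  | C c => simp [D_algebraMap]
  | add P Q hP hQ => simp [D_add, hP, hQ, add_mul, Finset.sum_add_distrib]
  | mul_X P i hP =>
    simp only [map_mul, MvPolynomial.aeval_X, D_mul, hP, MvPolynomial.pderiv_mul, map_add,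
      add_mul, Finset.sum_add_distrib, MvPolynomial.pderiv_X]
    congr 1
    · rw [Finset.sum_mul]; exact Finset.sum_congr rfl fun _ _ => by ring
    · rw [Finset.sum_eq_single i]
      · simp
      · intro j _ hj; simp [hj.symm]
      · simp

/-- the arithmetic function `n ↦ a n * (-log n)^k` -/
noncomputable def F (a : ArithmeticFunction ℂ) (k : ℕ) : ArithmeticFunction ℂ :=
  ⟨fun n => (-Complex.log n) ^ k * a n, by simp⟩

lemma F_apply (a : ArithmeticFunction ℂ) (k n : ℕ) :
    F a k n = (-Complex.log n) ^ k * a n := rfl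

lemma pderiv_zero {m : ℕ} (a : ArithmeticFunction ℂ)
    (ha : ∀ p : ℕ, p.Prime → 2 < p → a p ≠ 0) (Q : MvPolynomial (Fin m) ℂ)
    (hQ : MvPolynomial.aeval (fun j : Fin m => F a j) Q = 0) (d : ℕ) :
    ∀ j, MvPolynomial.aeval (fun j : Fin m => F a j) (MvPolynomial.pderiv j Q) d = 0 := by
  induction d using Nat.strong_induction_on with
  | _ d ih =>
  rcases Nat.eq_zero_or_pos d with rfl | hd
  · simp
  set G : Fin m → ArithmeticFunction ℂ :=
    fun j => MvPolynomial.aeval (fun j : Fin m => F a j) (MvPolynomial.pderiv j Q) with hG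
  let q : Polynomial ℂ := ∑ j : Fin m, Polynomial.monomial (j : ℕ) (G j d)
  have key : ∀ p : ℕ, p.Prime → 2 < p → q.IsRoot (-Complex.log p) := by
    intro p hp hp2
    have := Fact.mk hp
    have h1 := D_aeval p (fun j : Fin m => F a j) Q
    rw [hQ] at h1
    have h2 := congrArg (fun g : ArithmeticFunction ℂ => g (d * p)) h1
    have hterm : ∀ j : Fin m, (G j * D p (F a j)) (d * p) =
        G j d * (-Complex.log p) ^ (j : ℕ) * a p := by
      intro j
      rw [ArithmeticFunction.mul_apply, Finset.sum_eq_single (d, p)]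
      · simp [D_apply, F_apply, padicValNat_self, mul_assoc]
      · rintro ⟨x, y⟩ hxy hne
        obtain ⟨h3, h4⟩ := Nat.mem_divisorsAntidiagonal.1 hxy
        simp only at h3 ⊢
        by_cases hy : p ∣ y
        · obtain ⟨y', rfl⟩ := hy
          have h5 : x * y' = d := by
            have : p * (x * y') = p * d := by linarith
            exact Nat.eq_of_mul_eq_mul_left hp.pos this
          have hy1 : y' ≠ 1 := by
            rintro rfl
            apply hne; simp at h5 ⊢; exact h5
          have hy0 : y' ≠ 0 := by rintro rfl; simp at h5; omega
          have hx0 : 0 < x := by rcases Nat.eq_zero_or_pos x with rfl | h; · simp at h5; omega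
                                 exact h
          have : x < d := by rw [← h5]; nlinarith [show 2 ≤ y' by omega]
          rw [ih x this j, zero_mul]
        · simp [D_apply, padicValNat.eq_zero_of_not_dvd hy]
      · intro h; exfalso; apply h
        exact Nat.mem_divisorsAntidiagonal.2 ⟨rfl, Nat.mul_ne_zero hd.ne' hp.ne_zero⟩
    have hsum : ∀ (s : Finset (Fin m)) (f : Fin m → ArithmeticFunction ℂ) (n : ℕ),
        (∑ j ∈ s, f j) n = ∑ j ∈ s, f j n := by
      intro s f n
      classical
      induction s using Finset.induction_on with
      | empty => simp
      | insert b s hb ih => simp [Finset.sum_insert hb, ih]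
    rw [hsum] at h2
    have h3 : ∑ j : Fin m, G j d * (-Complex.log p) ^ (j : ℕ) * a p = 0 := by
      rw [← Finset.sum_congr rfl fun j _ => hterm j]
      rw [← h2]
      simp [D_apply]
    rw [← Finset.sum_mul] at h3
    have h4 := (mul_eq_zero.1 h3).resolve_right (ha p hp hp2)
    simpa [q, Polynomial.IsRoot, Polynomial.eval_finsetSum, Polynomial.eval_monomial] using h4
  have hq : q = 0 := by
    apply Polynomial.eq_zero_of_infinite_isRoot
    have hinf : ({p : ℕ | p.Prime} \ Set.Iic 2).Infinite :=
      Nat.infinite_setOfPred_prime.sdiff (Set.finite_Iic 2)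
    refine Set.Infinite.mono ?_ (hinf.image (f := fun p : ℕ => -Complex.log p) ?_)
    · rintro _ ⟨p, ⟨hp, hp2⟩, rfl⟩
      exact key p hp (by simpa using hp2)
    · rintro p ⟨hp, _⟩ r ⟨hr, _⟩ h
      simp only [neg_inj] at h
      rw [← Complex.natCast_log, ← Complex.natCast_log, Complex.ofReal_inj] at h
      have := Real.log_injOn_pos (Set.mem_Ioi.2 (Nat.cast_pos.2 hp.pos))
        (Set.mem_Ioi.2 (Nat.cast_pos.2 hr.pos)) h
      exact_mod_cast this
  intro j
  have h1 : q.coeff j = G j d := by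
    simp only [q, Polynomial.finsetSum_coeff, Polynomial.coeff_monomial]
    rw [Finset.sum_eq_single j]
    · simp
    · intro b _ hb; rw [if_neg]; exact fun h => hb (Fin.ext h)
    · simp
  rw [← h1, hq]; simp

lemma alg_const {m : ℕ} (a : ArithmeticFunction ℂ) (Q : MvPolynomial (Fin m) ℂ)
    (hc : ∀ e : Fin m →₀ ℕ, e ≠ 0 → Q.coeff e = 0)
    (hQ : MvPolynomial.aeval (fun j : Fin m => F a j) Q = 0) : Q = 0 := by
  obtain ⟨c, rfl⟩ : ∃ c, Q = MvPolynomial.C c := by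
    refine ⟨Q.coeff 0, ?_⟩
    ext e
    rw [MvPolynomial.coeff_C]
    split_ifs with h
    · rw [h]
    · exact hc e (Ne.symm h)
  have := congrArg (fun g : ArithmeticFunction ℂ => g 1) hQ
  simp [Algebra.algebraMap_eq_smul_one] at this
  simp [this]

lemma alg_indep {m : ℕ} (a : ArithmeticFunction ℂ)
    (ha : ∀ p : ℕ, p.Prime → 2 < p → a p ≠ 0) (N : ℕ) :
    ∀ Q : MvPolynomial (Fin m) ℂ, (∀ e : Fin m →₀ ℕ, N < e.degree → Q.coeff e = 0) →
      MvPolynomial.aeval (fun j : Fin m => F a j) Q = 0 → Q = 0 := by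
  induction N with
  | zero =>
    intro Q hd hQ
    refine alg_const a Q (fun e he => hd e ?_) hQ
    exact Nat.pos_of_ne_zero fun h => he ((Finsupp.degree_eq_zero_iff e).1 h)
  | succ N ih =>
    intro Q hd hQ
    have hp : ∀ j, MvPolynomial.pderiv j Q = 0 := by
      intro j
      apply ih
      · intro e he
        rw [MvPolynomial.coeff_pderiv, hd, zero_mul]
        simpa using he
      · ext d; exact pderiv_zero a ha Q hQ d j
    refine alg_const a Q (fun e he => ?_) hQ
    obtain ⟨j, hj⟩ : ∃ j, e j ≠ 0 := by
      by_contra h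
      push Not at h
      exact he (Finsupp.ext h)
    have h1 := MvPolynomial.coeff_pderiv (i := j) Q (e - Finsupp.single j 1)
    rw [hp j, MvPolynomial.coeff_zero, tsub_add_cancel_of_le] at h1
    · refine (mul_eq_zero.1 h1.symm).resolve_right ?_
      exact Nat.cast_add_one_ne_zero _
    · simpa [Finsupp.single_le_iff] using Nat.one_le_iff_ne_zero.2 hj

lemma rem_tendsto (f : ℕ → ℂ) (m : ℕ) (h : ∀ n ≤ m, f n = 0)
    (ha : LSeries.abscissaOfAbsConv f < ⊤) (j : ℕ) :
    Tendsto (fun x : ℕ => (x : ℂ) ^ j * (((m : ℂ) + 1) ^ x * LSeries f (x : ℂ) - f (m + 1)))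
      atTop (𝓝 0) := by
  classical
  let e : ℕ → ℂ := Pi.single (m + 1) (f (m + 1))
  have he : ∀ s, LSeriesHasSum e s (f (m + 1) / ((m : ℂ) + 1) ^ s) := by
    intro s
    have := hasSum_single (f := LSeries.term e s) (m + 1) (by
      intro b hb
      by_cases hb0 : b = 0
      · simp [hb0]
      · rw [LSeries.term_of_ne_zero hb0]; simp [e, hb])
    rw [LSeries.term_of_ne_zero (Nat.succ_ne_zero m)] at this
    simpa [e, LSeriesHasSum] using this
  let H : ℕ → ℂ := f - e
  have hH0 : ∀ n ≤ m + 1, H n = 0 := by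
    intro n hn
    rcases Nat.lt_or_ge m n with h1 | h1
    · obtain rfl : n = m + 1 := by omega
      simp [H, e]
    · have : n ≠ m + 1 := by omega
      simp [H, e, h n h1, this]
  have hea : LSeries.abscissaOfAbsConv e < ⊤ :=
    lt_of_le_of_lt ((he 0).LSeriesSummable.abscissaOfAbsConv_le) (by simp)
  have hHa : LSeries.abscissaOfAbsConv H < ⊤ :=
    lt_of_le_of_lt (LSeries.abscissaOfAbsConv_sub_le f e) (max_lt ha hea)
  have h1 := (LSeries.tendsto_cpow_mul_atTop hH0 hHa).comp tendsto_natCast_atTop_atTop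
  set r : ℝ := (m + 1) / (m + 2) with hr
  have hm : (0 : ℝ) < m + 2 := by positivity
  have h2 : Tendsto (fun x : ℕ => ((x : ℝ) ^ j * r ^ x)) atTop (𝓝 0) := by
    apply tendsto_pow_const_mul_const_pow_of_abs_lt_one
    rw [abs_of_nonneg (by positivity), hr, div_lt_one hm]; linarith
  have h3 : Tendsto (fun x : ℕ => (((x : ℝ) ^ j * r ^ x : ℝ) : ℂ)) atTop (𝓝 0) := by
    have h := (Complex.continuous_ofReal.tendsto 0).comp h2
    rw [Complex.ofReal_zero] at h
    exact h
  have h4 := h3.mul h1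
  rw [zero_mul] at h4
  refine h4.congr' ?_
  obtain ⟨B, hB⟩ : ∃ B : ℕ, LSeries.abscissaOfAbsConv f < (B : ℝ) := by
    obtain ⟨y, hay, hyt⟩ := exists_between ha
    lift y to ℝ using ⟨hyt.ne, ((OrderBot.bot_le _).trans_lt hay).ne'⟩
    obtain ⟨B, hB⟩ := exists_nat_gt y
    exact ⟨B, hay.trans (by exact_mod_cast hB)⟩
  filter_upwards [eventually_ge_atTop B] with x hx
  have hfs : LSeriesSummable f (x : ℂ) := by
    apply LSeriesSummable_of_abscissaOfAbsConv_lt_re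
    refine hB.trans_le ?_
    simp only [Complex.natCast_re]
    exact_mod_cast hx
  have hL : LSeries H (x : ℂ) = LSeries f x - f (m + 1) / ((m : ℂ) + 1) ^ x := by
    rw [LSeries_sub hfs (he x).LSeriesSummable, (he x).LSeries_eq, Complex.cpow_natCast]
  have hm1 : ((m : ℂ) + 1) ≠ 0 := by exact_mod_cast Nat.succ_ne_zero m
  have hm2 : ((m : ℂ) + 2) ≠ 0 := by exact_mod_cast (by omega : m + 2 ≠ 0)
  simp only [Function.comp, Complex.ofReal_natCast, hL, Complex.cpow_natCast, hr]
  push_cast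
  rw [show (m : ℂ) + 1 + 1 = m + 2 by ring, div_pow]
  field_simp

lemma elim (K : ℕ) (f : ℕ → ℕ → ℂ) (h0 : ∀ k, f k 0 = 0)
    (ha : ∀ k, LSeries.abscissaOfAbsConv (f k) < ⊤)
    (h : ∀ x : ℕ, 1 < x → ∑ k ∈ Finset.range K, (x : ℂ) ^ k * LSeries (f k) x = 0) (n : ℕ) :
    ∀ k < K, f k n = 0 := by
  induction n using Nat.strong_induction_on with
  | _ n ih =>
  rcases n with _ | m
  · intro k _; exact h0 k
  let q : Polynomial ℂ := ∑ k ∈ Finset.range K, Polynomial.monomial k (f k (m + 1))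
  have hq : Tendsto (fun x : ℕ => q.eval (x : ℂ)) atTop (𝓝 0) := by
    have h1 := tendsto_finsetSum (Finset.range K) (fun k hk =>
      rem_tendsto (f k) m (fun n hn => ih n (by omega) k (Finset.mem_range.1 hk)) (ha k) k)
    have h2 := h1.neg
    simp only [Finset.sum_const_zero, neg_zero] at h2
    refine h2.congr' ?_
    filter_upwards [eventually_gt_atTop 1] with x hx
    have h3 := h x hx
    have h4 : ∑ k ∈ Finset.range K, (x : ℂ) ^ k * (((m : ℂ) + 1) ^ x * LSeries (f k) (x : ℂ)) = 0 := by
      have := congrArg (fun z => ((m : ℂ) + 1) ^ x * z) h3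
      simp only [Finset.mul_sum, mul_zero] at this
      rw [← this]
      exact Finset.sum_congr rfl fun _ _ => by ring
    simp only [mul_sub, Finset.sum_sub_distrib, h4, q, Polynomial.eval_finsetSum,
      Polynomial.eval_monomial, zero_sub, neg_neg]
    exact Finset.sum_congr rfl fun _ _ => by ring
  have hq0 : q = 0 := by
    rcases lt_or_ge 0 q.degree with hd | hd
    · exfalso
      have h1 : Tendsto (fun x : ℕ => ‖(x : ℂ)‖) atTop atTop := by
        simpa using tendsto_natCast_atTop_atTop (R := ℝ)
      have h2 := q.tendsto_norm_atTop hd h1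
      exact not_tendsto_nhds_of_tendsto_atTop h2 _ hq.norm
    · have hc := Polynomial.eq_C_of_degree_le_zero hd
      rw [hc] at hq ⊢
      simp only [Polynomial.eval_C] at hq
      rw [tendsto_const_nhds_iff.1 hq]
      simp
  intro k hk
  have h1 : q.coeff k = f k (m + 1) := by
    simp [q, Polynomial.coeff_monomial, hk]
  rw [← h1, hq0]; simp

/-- coefficients of `1 - 2 * 2^{-s}` -/
noncomputable def g : ArithmeticFunction ℂ :=
  ⟨fun n => if n = 1 then 1 else if n = 2 then -2 else 0, by simp⟩

lemma g_apply (n : ℕ) : g n = if n = 1 then 1 else if n = 2 then -2 else 0 := rfl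

noncomputable def a : ArithmeticFunction ℂ := g * (ζ : ArithmeticFunction ℂ)

lemma a_prime (p : ℕ) (hp : p.Prime) (h2 : 2 < p) : a p ≠ 0 := by
  have h1 : p ≠ 1 := by omega
  have h3 : p ≠ 2 := by omega
  rw [a, ArithmeticFunction.coe_mul_zeta_apply, hp.sum_divisors]
  simp [g_apply, h1, h3]

lemma g_hasSum (s : ℂ) : LSeriesHasSum g s (1 - (2 : ℂ) ^ (1 - s)) := by
  have := hasSum_sum_of_ne_finset_zero (L := SummationFilter.unconditional ℕ) (f := LSeries.term g s) (s := {1, 2}) (by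
      intro b hb
      simp only [Finset.mem_insert, Finset.mem_singleton, not_or] at hb
      by_cases hb0 : b = 0
      · simp [hb0]
      · rw [LSeries.term_of_ne_zero hb0]; simp [g_apply, hb.1, hb.2])
  rw [Finset.sum_pair (by norm_num), LSeries.term_of_ne_zero (by norm_num),
    LSeries.term_of_ne_zero (by norm_num)] at this
  rw [LSeriesHasSum]
  convert this using 1
  rw [Complex.cpow_sub _ _ (by norm_num)]
  simp [g_apply]
  ring

lemma a_hasSum (s : ℂ) (hs : 1 < s.re) :
    LSeriesHasSum a s ((1 - (2 : ℂ) ^ (1 - s)) * riemannZeta s) := by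
  apply LSeriesHasSum_mul (g_hasSum s)
  exact LSeriesHasSum_zeta hs

lemma a_absc : LSeries.abscissaOfAbsConv a ≤ 1 := by
  apply LSeries.abscissaOfAbsConv_le_of_forall_lt_LSeriesSummable
  intro y hy
  exact (a_hasSum y (by simpa using hy)).LSeriesSummable

lemma F_eq (k : ℕ) : (F a k : ℕ → ℂ) = (-1 : ℂ) ^ k • (LSeries.logMul^[k] a) := by
  induction k with
  | zero => ext n; simp [F_apply]
  | succ k ih =>
    ext n
    have := congrFun ih n
    simp only [F_apply, Pi.smul_apply, smul_eq_mul] at this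
    rw [Function.iterate_succ', Pi.smul_apply, Function.comp_apply, LSeries.logMul, F_apply,
      smul_eq_mul, pow_succ, pow_succ]
    linear_combination (-Complex.log n) * this

lemma F_hasSum (η : ℂ → ℂ)
    (hformula : ∀ s : ℂ, s ≠ 1 → η s = (1 - (2 : ℂ) ^ ((1 : ℂ) - s)) * riemannZeta s)
    (k : ℕ) (s : ℂ) (hs : 1 < s.re) : LSeriesHasSum (F a k) s (iteratedDeriv k η s) := by
  have hab : LSeries.abscissaOfAbsConv a < s.re :=
    lt_of_le_of_lt a_absc (by exact_mod_cast hs)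
  have h1 : iteratedDeriv k η s = iteratedDeriv k (LSeries a) s := by
    apply Filter.EventuallyEq.iteratedDeriv_eq
    have ho : IsOpen {z : ℂ | 1 < z.re} := isOpen_lt continuous_const Complex.continuous_re
    filter_upwards [ho.mem_nhds hs] with z hz
    rw [(a_hasSum z hz).LSeries_eq]
    apply hformula
    rintro rfl
    simp at hz
  have hsum : LSeriesSummable (LSeries.logMul^[k] a) s := by
    apply LSeriesSummable_of_abscissaOfAbsConv_lt_re
    rwa [LSeries.absicssaOfAbsConv_logPowMul]
  rw [h1, LSeries_iteratedDeriv k hab, F_eq]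
  exact hsum.LSeriesHasSum.smul _

lemma aeval_hasSum {m : ℕ} (η : ℂ → ℂ)
    (hformula : ∀ s : ℂ, s ≠ 1 → η s = (1 - (2 : ℂ) ^ ((1 : ℂ) - s)) * riemannZeta s)
    (s : ℂ) (hs : 1 < s.re) (Q : MvPolynomial (Fin m) ℂ) :
    LSeriesHasSum (MvPolynomial.aeval (fun j : Fin m => F a j) Q) s
      (MvPolynomial.eval (fun j : Fin m => iteratedDeriv j η s) Q) := by
  induction Q using MvPolynomial.induction_on with
  | C c =>
    have h1 : LSeriesHasSum (1 : ArithmeticFunction ℂ) s 1 := by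
      have h := hasSum_single (f := LSeries.term (1 : ArithmeticFunction ℂ) s) 1 (by
        intro b hb
        by_cases hb0 : b = 0
        · simp [hb0]
        · rw [LSeries.term_of_ne_zero hb0]; simp [hb])
      rw [LSeries.term_of_ne_zero one_ne_zero] at h
      simpa [LSeriesHasSum] using h
    have h2 := h1.smul c
    simp only [MvPolynomial.aeval_C, MvPolynomial.eval_C, Algebra.algebraMap_eq_smul_one]
    rw [mul_one] at h2
    exact h2
  | add P Q hP hQ =>
    simp only [map_add]
    exact hP.add hQ
  | mul_X P i hP =>
    simp only [map_mul, MvPolynomial.aeval_X, MvPolynomial.eval_X]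
    exact LSeriesHasSum_mul hP (F_hasSum η hformula i s hs)

end EtaAux

/-- The Dirichlet eta function — the entire function satisfying
`η s = (1 - 2^(1-s)) * ζ s` for `s ≠ 1` (which agrees with `∑ (-1)^(n+1) n^(-s)` for
`Re s > 1`) — is differentially transcendental: there are no `n ∈ ℕ` and nonzero
polynomial `P ∈ ℂ[X₀, …, X_{n+1}]` with `P (s, η s, η' s, …, η⁽ⁿ⁾ s) = 0` for all `s`. -/
theorem dirichletEta_diffTranscendental (η : ℂ → ℂ)
    (hent : Differentiable ℂ η)
    (hformula : ∀ s : ℂ, s ≠ 1 → η s = (1 - (2 : ℂ) ^ ((1 : ℂ) - s)) * riemannZeta s) :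
    ¬ ∃ (n : ℕ) (P : MvPolynomial (Fin (n + 2)) ℂ),
      P ≠ 0 ∧ ∀ s : ℂ,
        MvPolynomial.eval
          (fun i : Fin (n + 2) =>
            if i.val = 0 then s else iteratedDeriv (i.val - 1) η s) P = 0 := by
  rintro ⟨n, P, hP, hz⟩
  apply hP
  have hQ : MvPolynomial.finSuccEquiv ℂ (n + 1) P = 0 := by
    set q := MvPolynomial.finSuccEquiv ℂ (n + 1) P with hq
    ext1 k
    rw [Polynomial.coeff_zero]
    have hz0 : MvPolynomial.aeval (fun j : Fin (n + 1) => EtaAux.F EtaAux.a j) (q.coeff k) = 0 := by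
      by_cases hk : k < q.natDegree + 1
      · ext d
        refine EtaAux.elim (q.natDegree + 1) (fun k => MvPolynomial.aeval
          (fun j : Fin (n + 1) => EtaAux.F EtaAux.a j) (q.coeff k)) ?_ ?_ ?_ d k hk
        · intro k; simp
        · intro k
          refine lt_of_le_of_lt (EtaAux.aeval_hasSum η hformula 2 (by norm_num)
            (q.coeff k)).LSeriesSummable.abscissaOfAbsConv_le ?_
          exact EReal.coe_lt_top _
        · intro x hx
          have h1 := hz (x : ℂ)
          have h2 : (fun i : Fin (n + 2) =>
              if i.val = 0 then (x : ℂ) else iteratedDeriv (i.val - 1) η x) =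
              Fin.cons (x : ℂ) (fun j : Fin (n + 1) => iteratedDeriv j η (x : ℂ)) := by
            ext i
            refine Fin.cases ?_ (fun j => ?_) i <;> simp
          rw [h2, MvPolynomial.eval_eq_eval_mv_eval', ← hq,
            Polynomial.eval_eq_sum_range' (n := q.natDegree + 1)
              (Nat.lt_succ_of_le Polynomial.natDegree_map_le)] at h1
          rw [← h1]
          refine Finset.sum_congr rfl fun k _ => ?_
          rw [(EtaAux.aeval_hasSum η hformula x (by simpa using hx) (q.coeff k)).LSeries_eq,
            Polynomial.coeff_map, mul_comm]
      · rw [Polynomial.coeff_eq_zero_of_natDegree_lt (by omega), map_zero]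
    refine EtaAux.alg_indep EtaAux.a EtaAux.a_prime (q.coeff k).totalDegree (q.coeff k) ?_ hz0
    intro e he
    exact MvPolynomial.coeff_eq_zero_of_totalDegree_lt he
  simpa using hQ
end

section
/- The Dirichlet beta function β, i.e., the entire L-function of the unique nonprincipal Dirichlet character modulo 4 (agreeing with ∑_{n=0}^∞ (−1)ⁿ (2n+1)^{−s} for Re(s) > 1), is differentially transcendental: there do not exist n ∈ ℕ and a nonzero polynomial P ∈ ℂ[X₀, X₁, …, X_{n+1}] such that P(s, β(s), β′(s), …, β⁽ⁿ⁾(s)) = 0 for all s ∈ ℂ. -/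
open Filter Topology

/-- The derivation `f ↦ (n ↦ v_p(n p) f(n p))` on arithmetic functions. -/
noncomputable def primeDer (p : ℕ) (f : ArithmeticFunction ℂ) : ArithmeticFunction ℂ :=
  ⟨fun n => (padicValNat p (p * n) : ℂ) * f (p * n), by simp⟩

lemma primeDer_apply (p : ℕ) (f : ArithmeticFunction ℂ) (n : ℕ) :
    primeDer p f n = (padicValNat p (p * n) : ℂ) * f (p * n) := rfl

lemma primeDer_add (p : ℕ) (f g : ArithmeticFunction ℂ) :
    primeDer p (f + g) = primeDer p f + primeDer p g := by
  ext n
  simp [primeDer_apply, mul_add]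

lemma primeDer_sum_aux (p : ℕ) [hp : Fact p.Prime] (f g : ArithmeticFunction ℂ) (n : ℕ) :
    ∑ x ∈ (p * n).divisorsAntidiagonal, (padicValNat p x.1 : ℂ) * f x.1 * g x.2
      = ∑ x ∈ n.divisorsAntidiagonal, (padicValNat p (p * x.1) : ℂ) * f (p * x.1) * g x.2 := by
  have hp0 : p ≠ 0 := hp.out.ne_zero
  symm
  refine Finset.sum_of_injOn (fun x => (p * x.1, x.2)) ?_ ?_ ?_ ?_
  · rintro ⟨a, b⟩ _ ⟨c, d⟩ _ h
    simp only [Prod.mk.injEq, mul_eq_mul_left_iff, hp0, or_false] at h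
    exact Prod.ext h.1 h.2
  · rintro ⟨a, b⟩ h
    simp only [Finset.mem_coe, Nat.mem_divisorsAntidiagonal] at h ⊢
    exact ⟨by rw [← h.1, mul_assoc], mul_ne_zero hp0 h.2⟩
  · rintro ⟨a, b⟩ h h'
    simp only [Nat.mem_divisorsAntidiagonal] at h
    by_cases hd : p ∣ a
    · exfalso
      obtain ⟨c, rfl⟩ := hd
      apply h'
      refine ⟨(c, b), ?_, rfl⟩
      simp only [Finset.mem_coe, Nat.mem_divisorsAntidiagonal]
      exact ⟨Nat.eq_of_mul_eq_mul_left hp.out.pos (by rw [← h.1, mul_assoc]),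
        right_ne_zero_of_mul h.2⟩
    · simp [padicValNat.eq_zero_of_not_dvd hd]
  · rintro ⟨a, b⟩ _
    rfl

lemma primeDer_mul (p : ℕ) [hp : Fact p.Prime] (f g : ArithmeticFunction ℂ) :
    primeDer p (f * g) = primeDer p f * g + f * primeDer p g := by
  have key : ∀ (f g : ArithmeticFunction ℂ) (n : ℕ), (primeDer p f * g) n =
      ∑ x ∈ (p * n).divisorsAntidiagonal, (padicValNat p x.1 : ℂ) * f x.1 * g x.2 := by
    intro f g n
    rw [primeDer_sum_aux, ArithmeticFunction.mul_apply]
    rfl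
  ext n
  have hsw : ∑ x ∈ (p * n).divisorsAntidiagonal, (padicValNat p x.1 : ℂ) * g x.1 * f x.2
      = ∑ x ∈ (p * n).divisorsAntidiagonal, (padicValNat p x.2 : ℂ) * g x.2 * f x.1 := by
    conv_lhs => rw [← Nat.map_swap_divisorsAntidiagonal, Finset.sum_map]
    rfl
  rw [ArithmeticFunction.add_apply, mul_comm f (primeDer p g), key, key, primeDer_apply,
    ArithmeticFunction.mul_apply, Finset.mul_sum,
    hsw, ← Finset.sum_add_distrib]
  refine Finset.sum_congr rfl ?_
  rintro ⟨a, b⟩ h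
  rw [Nat.mem_divisorsAntidiagonal] at h
  have ha : a ≠ 0 := by rintro rfl; exact h.2 (by simpa using h.1.symm)
  have hb : b ≠ 0 := by rintro rfl; exact h.2 (by simpa using h.1.symm)
  simp only at h ⊢
  rw [← h.1, padicValNat.mul ha hb]
  push_cast
  ring

lemma primeDer_algebraMap (p : ℕ) [hp : Fact p.Prime] (c : ℂ) :
    primeDer p (algebraMap ℂ (ArithmeticFunction ℂ) c) = 0 := by
  ext n
  have : p * n ≠ 1 := fun h => hp.out.one_lt.ne' (Nat.dvd_one.mp ⟨n, h.symm⟩)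
  simp [primeDer_apply, Algebra.algebraMap_eq_smul_one, ArithmeticFunction.one_apply, this]

lemma primeDer_aeval (p : ℕ) [hp : Fact p.Prime] {k : ℕ} (b : Fin k → ArithmeticFunction ℂ)
    (Q : MvPolynomial (Fin k) ℂ) :
    primeDer p (MvPolynomial.aeval b Q)
      = ∑ j, primeDer p (b j) * MvPolynomial.aeval b (MvPolynomial.pderiv j Q) := by
  induction Q using MvPolynomial.induction_on with
  | C a => simp [primeDer_algebraMap]
  | add q r hq hr => simp [primeDer_add, hq, hr, mul_add, Finset.sum_add_distrib]
  | mul_X q i hq =>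
    simp only [map_mul, MvPolynomial.aeval_X, primeDer_mul, hq, MvPolynomial.pderiv_mul, map_add,
      MvPolynomial.pderiv_X, mul_add, Finset.sum_add_distrib, Finset.sum_mul]
    congr 1
    · exact Finset.sum_congr rfl fun j _ => by ring
    · rw [Finset.sum_eq_single i]
      · simp [mul_comm]
      · intro j _ hj
        simp [Pi.single_apply, hj.symm]
      · simp

lemma algIndep_aux {k : ℕ} (b : Fin k → ArithmeticFunction ℂ) (p : Fin k → ℕ)
    (hp : ∀ i, (p i).Prime) (hdet : (Matrix.of fun i j => b j (p i)).det ≠ 0) (N : ℕ) :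
    ∀ Q : MvPolynomial (Fin k) ℂ, (∀ d, Q.coeff d ≠ 0 → d.degree < N) →
      MvPolynomial.aeval b Q = 0 → Q = 0 := by
  induction N with
  | zero =>
    intro Q h _
    ext d
    by_contra hd
    exact absurd (h d hd) (by simp)
  | succ N ih =>
    intro Q h hQ
    let M : Matrix (Fin k) (Fin k) (ArithmeticFunction ℂ) :=
      Matrix.of fun i j => primeDer (p i) (b j)
    let ev : ArithmeticFunction ℂ →+* ℂ :=
      { toFun := fun f => f 1
        map_one' := by simp
        map_mul' := fun f g => by simp [ArithmeticFunction.mul_apply]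
        map_zero' := rfl
        map_add' := fun f g => rfl }
    have hM : IsUnit M := by
      rw [Matrix.isUnit_iff_isUnit_det, ArithmeticFunction.isUnit_iff_isUnit_apply_one]
      change IsUnit (ev M.det)
      rw [RingHom.map_det, isUnit_iff_ne_zero]
      convert hdet using 2
      ext i j
      have := Fact.mk (hp i)
      change primeDer (p i) (b j) 1 = b j (p i)
      simp [primeDer_apply]
    have hmv : M.mulVec (fun j => MvPolynomial.aeval b (MvPolynomial.pderiv j Q)) = M.mulVec 0 := by
      rw [Matrix.mulVec_zero]
      ext1 i
      have := Fact.mk (hp i)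
      have := primeDer_aeval (p i) b Q
      rw [hQ] at this
      have h0 : primeDer (p i) 0 = 0 := by ext n; simp [primeDer_apply]
      rw [h0] at this
      rw [Matrix.mulVec, dotProduct]
      exact this.symm
    have hz := Matrix.mulVec_injective_of_isUnit hM hmv
    have hder : ∀ j, MvPolynomial.pderiv j Q = 0 := by
      intro j
      refine ih _ ?_ (congrFun hz j)
      intro d hd
      rw [MvPolynomial.coeff_pderiv] at hd
      have := h _ (left_ne_zero_of_mul hd)
      rw [map_add, Finsupp.degree_single] at this
      omega
    have hc : Q = MvPolynomial.C (Q.coeff 0) := by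
      ext d
      rw [MvPolynomial.coeff_C]
      split_ifs with hd
      · rw [hd]
      · obtain ⟨i, hi⟩ := Finsupp.ne_iff.mp (Ne.symm hd)
        have := congrArg (MvPolynomial.coeff (d - Finsupp.single i 1)) (hder i)
        rw [MvPolynomial.coeff_pderiv, tsub_add_cancel_of_le] at this
        · rw [MvPolynomial.coeff_zero] at this
          rcases mul_eq_zero.mp this with h | h
          · exact h
          · exfalso; norm_cast at h
        · rw [Finsupp.single_le_iff]
          exact Nat.one_le_iff_ne_zero.mpr hi
    rw [hc, MvPolynomial.aeval_C] at hQ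
    have := congrArg ev hQ
    change algebraMap ℂ (ArithmeticFunction ℂ) (Q.coeff 0) 1 = 0 at this
    rw [ArithmeticFunction.algebraMap_apply_one] at this
    rw [hc]
    simpa using this

lemma algIndep {k : ℕ} (b : Fin k → ArithmeticFunction ℂ) (p : Fin k → ℕ)
    (hp : ∀ i, (p i).Prime) (hdet : (Matrix.of fun i j => b j (p i)).det ≠ 0)
    (Q : MvPolynomial (Fin k) ℂ) (hQ : MvPolynomial.aeval b Q = 0) : Q = 0 :=
  algIndep_aux b p hp hdet (Q.totalDegree + 1) Q (fun d hd => Nat.lt_succ_of_le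
    (by
      have := MvPolynomial.le_totalDegree (MvPolynomial.mem_support_iff.mpr hd)
      exact this)) hQ

lemma LSeriesHasSum_aeval {k : ℕ} (b : Fin k → ArithmeticFunction ℂ) (s : ℂ) (v : Fin k → ℂ)
    (hb : ∀ j, LSeriesHasSum (b j) s (v j)) (Q : MvPolynomial (Fin k) ℂ) :
    LSeriesHasSum (MvPolynomial.aeval b Q : ArithmeticFunction ℂ) s (MvPolynomial.eval v Q) := by
  induction Q using MvPolynomial.induction_on with
  | C a =>
    have : LSeriesHasSum (1 : ArithmeticFunction ℂ) s 1 := by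
      rw [LSeriesHasSum]
      convert hasSum_ite_eq 1 (1:ℂ) using 2 with n
      rcases eq_or_ne n 0 with rfl | hn
      · simp
      · by_cases h1 : n = 1
        · simp [h1, LSeries.term]
        · simp [LSeries.term, hn, h1, ArithmeticFunction.one_apply]
    have := this.smul a
    simp only [MvPolynomial.aeval_C, MvPolynomial.eval_C, Algebra.algebraMap_eq_smul_one]
    simpa using! this
  | add q r hq hr => simpa using! hq.add hr
  | mul_X q i hq => 
    rw [map_mul, map_mul, MvPolynomial.aeval_X, MvPolynomial.eval_X]
    exact ArithmeticFunction.LSeriesHasSum_mul hq (hb i)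

lemma dirichlet_uniq (D : ℕ → ArithmeticFunction ℂ) (K : ℕ)
    (hs : ∀ k, LSeriesSummable (D k) 2)
    (h : ∀ N : ℕ, 2 ≤ N → ∑ k ∈ Finset.range K, (N : ℂ) ^ k * LSeries (D k) N = 0) :
    ∀ k < K, D k = 0 := by
  suffices H : ∀ m, ∀ k < K, D k m = 0 from fun k hk => by ext m; exact H m k hk
  intro m
  induction m using Nat.strong_induction_on with
  | _ m ih =>
  rcases m with _ | n
  · simp
  let S (k : ℕ) : ℕ → ℂ := fun j => if j = n + 1 then D k (n + 1) else 0
  let E (k : ℕ) : ℕ → ℂ := (D k : ℕ → ℂ) - S k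
  have hS : ∀ k s, LSeriesHasSum (S k) s (D k (n + 1) / ((n + 1 : ℕ) : ℂ) ^ s) := by
    intro k s
    rw [LSeriesHasSum]
    convert hasSum_ite_eq (n + 1) (D k (n + 1) / ((n + 1 : ℕ) : ℂ) ^ s) using 2 with j
    by_cases h1 : j = n + 1
    · simp [h1, LSeries.term, S]
    · simp [LSeries.term, h1, S]
  have hE2 : ∀ k, LSeriesSummable (E k) 2 := fun k => (hs k).sub (hS k 2).LSeriesSummable
  have hDE : ∀ k, ∀ N : ℕ, 2 ≤ N →
      LSeries (D k) N = D k (n + 1) / ((n + 1 : ℕ) : ℂ) ^ N + LSeries (E k) N := by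
    intro k N hN
    have hle : (2 : ℂ).re ≤ (N : ℂ).re := by simpa using (by exact_mod_cast hN : (2 : ℝ) ≤ N)
    have := LSeries_sub ((hs k).of_re_le_re hle) (hS k N).LSeriesSummable
    rw [(hS k N).LSeries_eq, Complex.cpow_natCast] at this
    rw [show E k = (D k : ℕ → ℂ) - S k from rfl, this]
    ring
  have hElim : ∀ k < K, Tendsto (fun N : ℕ => ((n + 2 : ℕ) : ℂ) ^ N * LSeries (E k) N) atTop
      (𝓝 (E k (n + 2))) := by
    intro k hk
    have := LSeries.tendsto_cpow_mul_atTop (f := E k) (n := n + 1) ?_ ?_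
    · have := this.comp tendsto_natCast_atTop_atTop
      refine this.congr fun N => ?_
      simp only [Function.comp, Complex.ofReal_natCast, Complex.cpow_natCast]
      push_cast
      ring
    · intro j hj
      rcases Nat.lt_or_ge j (n + 1) with hj' | hj'
      · simp [E, S, ih j hj' k hk, hj'.ne]
      · have : j = n + 1 := le_antisymm hj hj'
        simp [E, S, this]
    · exact (hE2 k).abscissaOfAbsConv_le.trans_lt (EReal.coe_lt_top _)
  let P : Polynomial ℂ := ∑ k ∈ Finset.range K, Polynomial.monomial k (D k (n + 1))
  have hP : Tendsto (fun N : ℕ => P.eval (N : ℂ)) atTop (𝓝 0) := by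
    set r : ℝ := ((n + 1 : ℕ) : ℝ) / (n + 2 : ℕ) with hr
    have hr0 : 0 ≤ r := by positivity
    have hr1 : r < 1 := by
      rw [hr, div_lt_one (by positivity)]
      exact_mod_cast Nat.lt_succ_self _
    have h1 : Tendsto (fun N : ℕ => -∑ k ∈ Finset.range K, (((N : ℝ) ^ k * r ^ N : ℝ) : ℂ) *
        (((n + 2 : ℕ) : ℂ) ^ N * LSeries (E k) N)) atTop
        (𝓝 (-∑ k ∈ Finset.range K, ((0 : ℝ) : ℂ) * E k (n + 2))) := by
      refine (tendsto_finsetSum _ fun k hk => ?_).neg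
      refine Tendsto.mul ?_ (hElim k (Finset.mem_range.mp hk))
      exact (Complex.continuous_ofReal.tendsto _).comp
        (tendsto_pow_const_mul_const_pow_of_lt_one k hr0 hr1)
    simp only [Complex.ofReal_zero, zero_mul, Finset.sum_const_zero, neg_zero] at h1
    refine h1.congr' ?_
    filter_upwards [eventually_ge_atTop 2] with N hN
    have h2 := h N hN
    have e1 : ((n + 1 : ℕ) : ℂ) ^ N ≠ 0 := pow_ne_zero _ (by exact_mod_cast Nat.succ_ne_zero n)
    have e2 : ((n + 2 : ℕ) : ℂ) ^ N ≠ 0 := pow_ne_zero _ (by exact_mod_cast Nat.succ_ne_zero (n + 1))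
    have h3 : ((n + 1 : ℕ) : ℂ) ^ N * ∑ k ∈ Finset.range K, (N : ℂ) ^ k * LSeries (D k) N
        = P.eval (N : ℂ) + ∑ k ∈ Finset.range K, (((N : ℝ) ^ k * r ^ N : ℝ) : ℂ) *
        (((n + 2 : ℕ) : ℂ) ^ N * LSeries (E k) N) := by
      rw [Polynomial.eval_finsetSum, ← Finset.sum_add_distrib, Finset.mul_sum]
      refine Finset.sum_congr rfl fun k _ => ?_
      rw [hDE k N hN, Polynomial.eval_monomial, hr, div_pow, Complex.ofReal_mul, Complex.ofReal_div,
        Complex.ofReal_pow, Complex.ofReal_pow, Complex.ofReal_pow, Complex.ofReal_natCast,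
        Complex.ofReal_natCast, Complex.ofReal_natCast]
      field_simp
    rw [h2, mul_zero] at h3
    linear_combination h3
  have hP0 : P = 0 := by
    by_cases hd : 0 < P.degree
    · have h1 := P.tendsto_norm_atTop hd (l := atTop) (z := fun N : ℕ => (N : ℂ))
        (by simpa using tendsto_natCast_atTop_atTop (R := ℝ))
      exact absurd h1 (not_tendsto_atTop_of_tendsto_nhds hP.norm)
    · rw [Polynomial.eq_C_of_degree_le_zero (not_lt.mp hd)] at hP ⊢
      simp only [Polynomial.eval_C] at hP
      rw [tendsto_nhds_unique tendsto_const_nhds hP, map_zero]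
  intro k hk
  have := congrArg (fun q => Polynomial.coeff q k) hP0
  simpa [P, Polynomial.finsetSum_coeff, Polynomial.coeff_monomial, hk] using this

/-- The arithmetic function of the `j`-th derivative of the L-function. -/
noncomputable def betaDer (χ : DirichletCharacter ℂ 4) (j : ℕ) : ArithmeticFunction ℂ :=
  ⟨fun m => (-Complex.log m) ^ j * χ m, by
    have : ¬ IsUnit (0 : ZMod 4) := by rw [isUnit_zero_iff]; decide
    simp [χ.map_nonunit this]⟩

lemma betaDer_hasSum (χ : DirichletCharacter ℂ 4) (j : ℕ) (s : ℂ) (hs : 1 < s.re) :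
    LSeriesHasSum (betaDer χ j) s (iteratedDeriv j (DirichletCharacter.LFunction χ) s) := by
  have habs : LSeries.abscissaOfAbsConv (fun m : ℕ => χ m) < s.re := by
    refine lt_of_le_of_lt ?_ (by exact_mod_cast hs : ((1 : ℝ) : EReal) < s.re)
    refine LSeries.abscissaOfAbsConv_le_of_forall_lt_LSeriesSummable fun y hy => ?_
    exact ZMod.LSeriesSummable_of_one_lt_re χ (by simpa using hy)
  have h1 : iteratedDeriv j (DirichletCharacter.LFunction χ) s
      = iteratedDeriv j (LSeries (fun m : ℕ => χ m)) s := by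
    refine Filter.EventuallyEq.iteratedDeriv_eq j ?_
    have : IsOpen {z : ℂ | 1 < z.re} := isOpen_lt continuous_const Complex.continuous_re
    filter_upwards [this.mem_nhds hs] with z hz
    exact DirichletCharacter.LFunction_eq_LSeries χ hz
  have h2 : (betaDer χ j : ℕ → ℂ) = (-1 : ℂ) ^ j • (LSeries.logMul^[j] (fun m : ℕ => χ m)) := by
    have : ∀ j, LSeries.logMul^[j] (fun m : ℕ => χ m) = fun m : ℕ => Complex.log m ^ j * χ m := by
      intro j
      induction j with
      | zero => simp
      | succ j ih =>
        rw [Function.iterate_succ_apply', ih]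
        funext m
        simp only [LSeries.logMul]
        ring
    rw [this]
    funext m
    change (-Complex.log m) ^ j * χ m = (-1 : ℂ) ^ j * (Complex.log m ^ j * χ m)
    rw [neg_pow]; ring
  rw [h1, LSeries_iteratedDeriv j habs, h2]
  refine LSeriesHasSum.smul _ (LSeriesSummable.LSeriesHasSum ?_)
  apply LSeriesSummable_of_abscissaOfAbsConv_lt_re
  rwa [LSeries.absicssaOfAbsConv_logPowMul]

lemma betaDer_det (χ : DirichletCharacter ℂ 4) (k : ℕ) :
    ∃ p : Fin k → ℕ, (∀ i, (p i).Prime) ∧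
      (Matrix.of fun i j : Fin k => betaDer χ j (p i)).det ≠ 0 := by
  refine ⟨fun i => Nat.nth Nat.Prime (i + 1), fun i => Nat.prime_nth_prime _, ?_⟩
  have hM : (Matrix.of fun i j : Fin k => betaDer χ j (Nat.nth Nat.Prime (i + 1)))
      = Matrix.of fun i j : Fin k => χ (Nat.nth Nat.Prime (i + 1) : ℕ) *
        Matrix.vandermonde (fun i : Fin k => -Complex.log (Nat.nth Nat.Prime (i + 1) : ℕ)) i j := by
    ext i j
    simp only [Matrix.of_apply, Matrix.vandermonde_apply]
    exact mul_comm _ _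
  rw [hM, Matrix.det_mul_column]
  refine mul_ne_zero (Finset.prod_ne_zero_iff.mpr fun i _ => ?_) ?_
  · have hlt : 2 < Nat.nth Nat.Prime (i + 1) := by
      rw [← Nat.nth_prime_zero_eq_two]
      exact Nat.nth_strictMono Nat.infinite_setOfPred_prime (Nat.succ_pos _)
    have hcop : (Nat.nth Nat.Prime (i + 1)).Coprime 4 := by
      rw [show 4 = 2 ^ 2 from rfl]
      refine Nat.Coprime.pow_right 2 ?_
      exact (Nat.coprime_primes (Nat.prime_nth_prime _) Nat.prime_two).mpr hlt.ne'
    exact (((ZMod.isUnit_iff_coprime _ _).mpr hcop).map χ).ne_zero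
  · rw [Matrix.det_vandermonde_ne_zero_iff]
    intro i j hij
    have h0 : ∀ i : Fin k, ((Nat.nth Nat.Prime (i + 1) : ℕ) : ℂ) ≠ 0 := fun i => by
      exact_mod_cast (Nat.prime_nth_prime _).ne_zero
    have := congrArg Complex.exp (neg_injective hij)
    rw [Complex.exp_log (h0 i), Complex.exp_log (h0 j)] at this
    have := Nat.nth_injective Nat.infinite_setOfPred_prime (Nat.cast_injective this)
    exact Fin.ext (by omega)

/-- The Dirichlet beta function — the entire L-function of the unique nonprincipal
Dirichlet character modulo 4 (agreeing with `∑ (-1)^n (2n+1)^(-s)` for `Re s > 1`) — is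
differentially transcendental: there are no `n ∈ ℕ` and nonzero polynomial
`P ∈ ℂ[X₀, …, X_{n+1}]` with `P (s, β s, β' s, …, β⁽ⁿ⁾ s) = 0` for all `s ∈ ℂ`. -/
theorem dirichletBeta_diffTranscendental (χ : DirichletCharacter ℂ 4) (hχ : χ ≠ 1) :
    ¬ ∃ (n : ℕ) (P : MvPolynomial (Fin (n + 2)) ℂ),
      P ≠ 0 ∧ ∀ s : ℂ,
        MvPolynomial.eval
          (fun i : Fin (n + 2) =>
            if i.val = 0 then s
            else iteratedDeriv (i.val - 1) (DirichletCharacter.LFunction χ) s) P = 0 := by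
  rintro ⟨n, P, hP0, hP⟩
  apply hP0
  let b : Fin (n + 1) → ArithmeticFunction ℂ := fun j => betaDer χ j
  let R := MvPolynomial.finSuccEquiv ℂ (n + 1) P
  let D : ℕ → ArithmeticFunction ℂ := fun k => MvPolynomial.aeval b (R.coeff k)
  have hD : ∀ k, ∀ s : ℂ, 1 < s.re → LSeriesHasSum (D k) s (MvPolynomial.eval
      (fun j : Fin (n + 1) => iteratedDeriv j (DirichletCharacter.LFunction χ) s) (R.coeff k)) :=
    fun k s hs => LSeriesHasSum_aeval b s _ (fun j => betaDer_hasSum χ j s hs) _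
  have hz := dirichlet_uniq D (R.natDegree + 1) (fun k => (hD k 2 (by simp)).LSeriesSummable) (by
    intro N hN
    have hre : 1 < (N : ℂ).re := by simpa using (by exact_mod_cast hN : 1 < N)
    have h1 := hP N
    have h2 : (fun i : Fin (n + 2) => if i.val = 0 then (N : ℂ)
        else iteratedDeriv (i.val - 1) (DirichletCharacter.LFunction χ) (N : ℂ))
        = Fin.cons (N : ℂ) (fun j : Fin (n + 1) =>
          iteratedDeriv j (DirichletCharacter.LFunction χ) (N : ℂ)) := by
      funext i
      refine Fin.cases ?_ (fun j => ?_) i <;> simp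
    rw [h2, MvPolynomial.eval_eq_eval_mv_eval', Polynomial.eval_map,
      Polynomial.eval₂_eq_sum_range] at h1
    rw [← h1]
    refine Finset.sum_congr rfl fun k _ => ?_
    rw [(hD k N hre).LSeries_eq, mul_comm])
  obtain ⟨p, hp, hdet⟩ := betaDer_det χ (n + 1)
  have hR : R = 0 := by
    ext1 k
    rw [Polynomial.coeff_zero]
    rcases Nat.lt_or_ge k (R.natDegree + 1) with hk | hk
    · exact algIndep b p hp hdet _ (hz k hk)
    · exact Polynomial.coeff_eq_zero_of_natDegree_lt hk
  exact (map_eq_zero_iff _ (MvPolynomial.finSuccEquiv ℂ (n + 1)).injective).mp hR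
end
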